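/- arXiv:1904.08578 — 3 statements merged into one kernel-verified Lean document; each statement's English description precedes it below -/
import Mathlib

section
/- Let V be a simple weight module with finite-dimensional weight spaces over the N=2 Ramond algebra 𝔤. Then V is a highest weight module, or a lowest weight module, or V is cuspidal with dim(V_λ ∩ V_τ) ≤ 2 for every λ ∈ ℂ and every parity τ ∈ {0,1}. -/
open Submodule

/-- A module over the `N = 2` Ramond algebra `𝔤`: a `ℤ/2`-graded complex vector
space `V = even ⊕ odd` with parity-preserving operators `L m`, `H m`,
parity-reversing operators `Gp m` (`G_m^+`), `Gm m` (`G_m^-`), and a scalar `c₀`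
(the action of the central element `C`), subject to the defining relations. -/
structure RamondRep (V : Type) [AddCommGroup V] [Module ℂ V] : Type where
  L : ℤ → V →ₗ[ℂ] V
  H : ℤ → V →ₗ[ℂ] V
  Gp : ℤ → V →ₗ[ℂ] V
  Gm : ℤ → V →ₗ[ℂ] V
  c₀ : ℂ
  even : Submodule ℂ V
  odd : Submodule ℂ V
  grading : IsCompl even odd
  L_even : ∀ (m : ℤ), ∀ v ∈ even, L m v ∈ even
  L_odd : ∀ (m : ℤ), ∀ v ∈ odd, L m v ∈ odd
  H_even : ∀ (m : ℤ), ∀ v ∈ even, H m v ∈ even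
  H_odd : ∀ (m : ℤ), ∀ v ∈ odd, H m v ∈ odd
  Gp_even : ∀ (m : ℤ), ∀ v ∈ even, Gp m v ∈ odd
  Gp_odd : ∀ (m : ℤ), ∀ v ∈ odd, Gp m v ∈ even
  Gm_even : ∀ (m : ℤ), ∀ v ∈ even, Gm m v ∈ odd
  Gm_odd : ∀ (m : ℤ), ∀ v ∈ odd, Gm m v ∈ even
  rel_LL : ∀ (m n : ℤ) (v : V),
    L m (L n v) - L n (L m v) =
      ((n : ℂ) - (m : ℂ)) • L (m + n) v +
        ((1 / 12 : ℂ) * ((n : ℂ) ^ 3 - (n : ℂ)) *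
          (if m + n = 0 then (1 : ℂ) else 0) * c₀) • v
  rel_HH : ∀ (m n : ℤ) (v : V),
    H m (H n v) - H n (H m v) =
      ((1 / 3 : ℂ) * (m : ℂ) * (if m + n = 0 then (1 : ℂ) else 0) * c₀) • v
  rel_LH : ∀ (m n : ℤ) (v : V),
    L m (H n v) - H n (L m v) = (n : ℂ) • H (m + n) v
  rel_LGp : ∀ (m p : ℤ) (v : V),
    L m (Gp p v) - Gp p (L m v) = ((p : ℂ) - (m : ℂ) / 2) • Gp (p + m) v
  rel_LGm : ∀ (m p : ℤ) (v : V),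
    L m (Gm p v) - Gm p (L m v) = ((p : ℂ) - (m : ℂ) / 2) • Gm (p + m) v
  rel_HGp : ∀ (m p : ℤ) (v : V),
    H m (Gp p v) - Gp p (H m v) = Gp (m + p) v
  rel_HGm : ∀ (m p : ℤ) (v : V),
    H m (Gm p v) - Gm p (H m v) = -(Gm (m + p) v)
  rel_GpGm : ∀ (p q : ℤ) (v : V),
    Gp p (Gm q v) + Gm q (Gp p v) =
      (-2 : ℂ) • L (p + q) v + ((p : ℂ) - (q : ℂ)) • H (p + q) v +
        ((1 / 3 : ℂ) * ((p : ℂ) ^ 2 - 1 / 4) *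
          (if p + q = 0 then (1 : ℂ) else 0) * c₀) • v
  rel_GpGp : ∀ (p q : ℤ) (v : V), Gp p (Gp q v) + Gp q (Gp p v) = 0
  rel_GmGm : ∀ (p q : ℤ) (v : V), Gm p (Gm q v) + Gm q (Gm p v) = 0

namespace RamondRep

variable {V : Type} [AddCommGroup V] [Module ℂ V]

/-- The weight space `V_μ = {v ∈ V : L₀ v = μ v}`. -/
def wt (ρ : RamondRep V) (μ : ℂ) : Submodule ℂ V :=
  Module.End.eigenspace (ρ.L 0) μ

/-- The parity components, indexed by `ZMod 2`. -/
def parity (ρ : RamondRep V) (τ : ZMod 2) : Submodule ℂ V :=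
  if τ = 0 then ρ.even else ρ.odd

/-- `V` is a weight module: it is the sum of its weight spaces. -/
def IsWeight (ρ : RamondRep V) : Prop := (⨆ μ : ℂ, ρ.wt μ) = ⊤

/-- `V` is cuspidal: a weight module with uniformly bounded weight multiplicities
in each parity. -/
def Cuspidal (ρ : RamondRep V) : Prop :=
  ρ.IsWeight ∧ ∃ p : ℕ, ∀ (μ : ℂ) (τ : ZMod 2),
    Module.rank ℂ ↥(ρ.wt μ ⊓ ρ.parity τ) ≤ (p : Cardinal)

/-- A subspace invariant under all the operators. -/
def IsSubmod (ρ : RamondRep V) (W : Submodule ℂ V) : Prop :=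
  (∀ (m : ℤ), ∀ v ∈ W, ρ.L m v ∈ W) ∧ (∀ (m : ℤ), ∀ v ∈ W, ρ.H m v ∈ W) ∧
    (∀ (m : ℤ), ∀ v ∈ W, ρ.Gp m v ∈ W) ∧ (∀ (m : ℤ), ∀ v ∈ W, ρ.Gm m v ∈ W)

/-- A graded subspace invariant under all the operators. -/
def IsGradedSubmod (ρ : RamondRep V) (W : Submodule ℂ V) : Prop :=
  ρ.IsSubmod W ∧ W = (W ⊓ ρ.even) ⊔ (W ⊓ ρ.odd)

/-- The trivial representation: all operators act by zero. -/
def IsTrivialRep (ρ : RamondRep V) : Prop :=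
  ∀ (m : ℤ) (v : V), ρ.L m v = 0 ∧ ρ.H m v = 0 ∧ ρ.Gp m v = 0 ∧ ρ.Gm m v = 0

/-- `V` is simple: nontrivial, and its only graded submodules are `⊥` and `⊤`. -/
def IsSimple (ρ : RamondRep V) : Prop :=
  ¬ ρ.IsTrivialRep ∧
    ∀ W : Submodule ℂ V, ρ.IsGradedSubmod W → W = ⊥ ∨ W = ⊤

/-- `V` is generated by `v` as a `𝔤`-module. -/
def GeneratedBy (ρ : RamondRep V) (v : V) : Prop :=
  ∀ W : Submodule ℂ V, ρ.IsSubmod W → v ∈ W → W = ⊤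

/-- `V` is a highest weight module. -/
def IsHighestWeight (ρ : RamondRep V) : Prop :=
  ∃ v : V, v ≠ 0 ∧ ρ.GeneratedBy v ∧
    (∃ h h' : ℂ, ρ.L 0 v = h • v ∧ ρ.H 0 v = h' • v) ∧
    (∀ m : ℤ, 0 < m → ρ.L m v = 0 ∧ ρ.H m v = 0 ∧ ρ.Gp m v = 0 ∧ ρ.Gm m v = 0) ∧
    ρ.Gp 0 v = 0

/-- `V` is a lowest weight module. -/
def IsLowestWeight (ρ : RamondRep V) : Prop :=
  ∃ v : V, v ≠ 0 ∧ ρ.GeneratedBy v ∧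
    (∃ h h' : ℂ, ρ.L 0 v = h • v ∧ ρ.H 0 v = h' • v) ∧
    (∀ m : ℤ, m < 0 → ρ.L m v = 0 ∧ ρ.H m v = 0 ∧ ρ.Gp m v = 0 ∧ ρ.Gm m v = 0) ∧
    ρ.Gm 0 v = 0

end RamondRep


lemma common_eig {U : Type} [AddCommGroup U] [Module ℂ U] [FiniteDimensional ℂ U] [Nontrivial U]
    (E J : ℤ → U →ₗ[ℂ] U) (h : ℂ) (E0 : ∀ u, E 0 u = 0) (J0 : ∀ u, J 0 u = h • u)
    (EE : ∀ (a b : ℤ) (u : U), E a (E b u) =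
      E b (E a u) + (a : ℂ) • E a u - (b : ℂ) • E b u + ((b : ℂ) - a) • E (a + b) u)
    (EJ : ∀ (a b : ℤ) (u : U), E a (J b u) =
      J b (E a u) + (b : ℂ) • (J (a + b) u - J b u)) :
    ∃ (e : ℂ) (u : U), u ≠ 0 ∧ ∀ a : ℤ, E a u = ((a : ℂ) * e) • u ∧ J a u = h • u := by
  classical
  obtain ⟨e, he, hmax⟩ := Set.exists_max_image {μ : ℂ | Module.End.HasEigenvalue (E 1) μ}
    Complex.re (Module.End.finite_hasEigenvalue (E 1)) (Module.End.exists_eigenvalue (E 1))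
  have hE1 : ∀ k : ℕ, 1 ≤ k → ∀ w, E 1 w = (e + (k : ℂ)) • w → w = 0 := by
    intro k hk w hw
    by_contra hne
    have := hmax (e + k) (Module.End.hasEigenvalue_of_hasEigenvector
      (Module.End.hasEigenvector_iff.2 ⟨Module.End.mem_eigenspace_iff.2 hw, hne⟩))
    simp at this
    omega
  obtain ⟨v, hv⟩ := Module.End.HasEigenvalue.exists_hasEigenvector he
  have hv0 : v ≠ 0 := hv.2
  have hve : E 1 v = e • v := hv.apply_eq_smul
  -- eigenvalues of `E (-1)`
  have hEm : ∀ k : ℕ, 1 ≤ k → ∀ w, E (-1) w = (-(e + (k : ℂ))) • w → w = 0 := by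
    by_contra hcon
    push Not at hcon
    obtain ⟨k0, hk0, w0, hw0, hw0'⟩ := hcon
    have hfin : {k : ℕ | Module.End.HasEigenvalue (E (-1)) (-(e + (k : ℂ)))}.Finite := by
      refine Set.Finite.preimage (f := fun k : ℕ => -(e + (k : ℂ))) ?_
        (Module.End.finite_hasEigenvalue (E (-1)))
      intro a _ b _ hab
      simpa using hab
    obtain ⟨k, hk, hkmax⟩ := Set.exists_max_image
      ({k : ℕ | Module.End.HasEigenvalue (E (-1)) (-(e + (k : ℂ)))} ∩ {k | 1 ≤ k})
      id (hfin.inter_of_left _) ⟨k0, Module.End.hasEigenvalue_of_hasEigenvector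
      (Module.End.hasEigenvector_iff.2 ⟨Module.End.mem_eigenspace_iff.2 hw0, hw0'⟩), hk0⟩
    obtain ⟨w, hw⟩ := Module.End.HasEigenvalue.exists_hasEigenvector hk.1
    have hw1 : E (-1) w = (-(e + (k : ℂ))) • w := hw.apply_eq_smul
    have hz : E 1 w - (e + (k : ℂ)) • w = 0 := by
      by_contra hne
      have : Module.End.HasEigenvalue (E (-1)) (-(e + ((k + 1 : ℕ) : ℂ))) := by
        refine Module.End.hasEigenvalue_of_hasEigenvector
          (Module.End.hasEigenvector_iff.2 ⟨Module.End.mem_eigenspace_iff.2 ?_, hne⟩)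
        have h1 := EE (-1) 1 w
        simp only [map_sub, map_smul, hw1, h1]
        norm_num [E0]
        module
      have := hkmax (k + 1) ⟨this, by simp⟩
      simp at this
    exact hw.2 (hE1 k hk.2 w (sub_eq_zero.1 hz))
  -- nonpositive indices
  have hneg : ∀ n : ℕ, E (-(n : ℤ)) v = ((-(n : ℂ)) * e) • v ∧ J (-(n : ℤ)) v = h • v := by
    intro n
    induction n with
    | zero => simp [E0, J0]
    | succ n ih =>
      have hidx : (1 : ℤ) + -((n + 1 : ℕ) : ℤ) = -(n : ℤ) := by push_cast; ring
      constructor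
      · have h1 := EE 1 (-((n + 1 : ℕ) : ℤ)) v
        rw [hidx, hve, ih.1, map_smul] at h1
        refine sub_eq_zero.1 (hE1 (n + 1) (by omega) _ ?_)
        rw [map_sub, map_smul, hve, h1]
        push_cast
        module
      · have h1 := EJ 1 (-((n + 1 : ℕ) : ℤ)) v
        rw [hidx, hve, ih.2, map_smul] at h1
        refine sub_eq_zero.1 (hE1 (n + 1) (by omega) _ ?_)
        rw [map_sub, map_smul, hve, h1]
        push_cast
        module
  have hvm : E (-1) v = (-e) • v := by simpa using (hneg 1).1
  have hpos : ∀ n : ℕ, E (n : ℤ) v = ((n : ℂ) * e) • v ∧ J (n : ℤ) v = h • v := by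
    intro n
    induction n with
    | zero => simp [E0, J0]
    | succ n ih =>
      have hidx : (-1 : ℤ) + ((n + 1 : ℕ) : ℤ) = (n : ℤ) := by push_cast; ring
      constructor
      · have h1 := EE (-1) ((n + 1 : ℕ) : ℤ) v
        rw [hidx, hvm, ih.1, map_smul] at h1
        refine sub_eq_zero.1 (hEm (n + 1) (by omega) _ ?_)
        rw [map_sub, map_smul, hvm, h1]
        push_cast
        module
      · have h1 := EJ (-1) ((n + 1 : ℕ) : ℤ) v
        rw [hidx, hvm, ih.2, map_smul] at h1
        refine sub_eq_zero.1 (hEm (n + 1) (by omega) _ ?_)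
        rw [map_sub, map_smul, hvm, h1]
        push_cast
        module
  refine ⟨e, v, hv0, fun a => ?_⟩
  obtain ⟨n, rfl | rfl⟩ := a.eq_nat_or_neg
  · simpa using hpos n
  · simpa using hneg n

/-- an eigenvector in the span of eigenvectors -/
lemma mem_span_eig {V : Type} [AddCommGroup V] [Module ℂ V] (T : V →ₗ[ℂ] V) (S : Set V)
    (hS : ∀ x ∈ S, ∃ c : ℂ, T x = c • x) (v : V) (hv : v ∈ span ℂ S) (μ : ℂ)
    (hT : T v = μ • v) : v ∈ span ℂ {x ∈ S | T x = μ • x} := by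
  have hsub : S ⊆ {x ∈ S | T x = μ • x} ∪ {x | ∃ c : ℂ, c ≠ μ ∧ T x = c • x} := by
    intro x hx
    obtain ⟨c, hc⟩ := hS x hx
    by_cases h : c = μ
    · left; exact ⟨hx, h ▸ hc⟩
    · right; exact ⟨c, h, hc⟩
  have h1 := span_mono hsub hv
  rw [span_union, mem_sup] at h1
  obtain ⟨a, ha, b, hb, rfl⟩ := h1
  have ha' : a ∈ Module.End.eigenspace T μ := by
    refine span_le.2 ?_ ha
    intro x hx
    exact Module.End.mem_eigenspace_iff.2 hx.2
  have hb1 : b ∈ Module.End.eigenspace T μ := by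
    have : a + b ∈ Module.End.eigenspace T μ := Module.End.mem_eigenspace_iff.2 hT
    exact (Submodule.add_mem_iff_right _ ha').1 this
  have hb2 : b ∈ ⨆ c, ⨆ (_ : c ≠ μ), Module.End.eigenspace T c := by
    refine span_le.2 ?_ hb
    rintro x ⟨c, hc, hx⟩
    exact mem_iSup_of_mem c (mem_iSup_of_mem hc (Module.End.mem_eigenspace_iff.2 hx))
  have := (Module.End.eigenspaces_iSupIndep T) μ
  have hb0 : b = 0 := by
    have := disjoint_def.1 this b hb1 hb2
    exact this
  simpa [hb0] using ha

/-- The centreless algebra of vector fields on the `(1|1)` torus, with parity operator `s`. -/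
structure WRep (V : Type) [AddCommGroup V] [Module ℂ V] : Type where
  D : ℤ → V →ₗ[ℂ] V
  I : ℤ → V →ₗ[ℂ] V
  P : ℤ → V →ₗ[ℂ] V
  Q : ℤ → V →ₗ[ℂ] V
  s : V →ₗ[ℂ] V
  DD : ∀ (m n : ℤ) (v : V), D m (D n v) = D n (D m v) + ((n : ℂ) - m) • D (m + n) v
  DI : ∀ (m n : ℤ) (v : V), D m (I n v) = I n (D m v) + (n : ℂ) • I (m + n) v
  II : ∀ (m n : ℤ) (v : V), I m (I n v) = I n (I m v)
  DQ : ∀ (m n : ℤ) (v : V), D m (Q n v) = Q n (D m v) + (n : ℂ) • Q (m + n) v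
  DP : ∀ (m n : ℤ) (v : V), D m (P n v) = P n (D m v) + ((n : ℂ) - m) • P (m + n) v
  IQ : ∀ (m n : ℤ) (v : V), I m (Q n v) = Q n (I m v) - Q (m + n) v
  IP : ∀ (m n : ℤ) (v : V), I m (P n v) = P n (I m v) + P (m + n) v
  QP : ∀ (m n : ℤ) (v : V), Q m (P n v) = -P n (Q m v) + D (m + n) v + (m : ℂ) • I (m + n) v
  QQ : ∀ (m n : ℤ) (v : V), Q m (Q n v) = -Q n (Q m v)
  PP : ∀ (m n : ℤ) (v : V), P m (P n v) = -P n (P m v)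
  ss : ∀ v, s (s v) = v
  sD : ∀ (m : ℤ) (v : V), s (D m v) = D m (s v)
  sI : ∀ (m : ℤ) (v : V), s (I m v) = I m (s v)
  sP : ∀ (m : ℤ) (v : V), s (P m v) = -P m (s v)
  sQ : ∀ (m : ℤ) (v : V), s (Q m v) = -Q m (s v)

lemma zero_of_eq_neg {V : Type} [AddCommGroup V] [Module ℂ V] {x : V} (h : x = -x) : x = 0 := by
  have h2 : (2 : ℂ) • x = 0 := by
    rw [two_smul]; nth_rewrite 2 [h]; simp
  exact (smul_eq_zero.1 h2).resolve_left two_ne_zero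

namespace WRep

variable {V : Type} [AddCommGroup V] [Module ℂ V]

/-- reversal of the grading -/
def flip (ρ : WRep V) : WRep V where
  D n := -ρ.D (-n)
  I n := ρ.I (-n)
  P n := -ρ.P (-n)
  Q n := ρ.Q (-n)
  s := ρ.s
  DD m n v := by
    simp only [LinearMap.neg_apply, map_neg]
    rw [ρ.DD (-m) (-n), neg_add m n]; push_cast; module
  DI m n v := by
    simp only [LinearMap.neg_apply, map_neg]
    rw [ρ.DI (-m) (-n), neg_add m n]; push_cast; module
  II m n v := ρ.II _ _ _
  DQ m n v := by
    simp only [LinearMap.neg_apply, map_neg]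
    rw [ρ.DQ (-m) (-n), neg_add m n]; push_cast; module
  DP m n v := by
    simp only [LinearMap.neg_apply, map_neg]
    rw [ρ.DP (-m) (-n), neg_add m n]; push_cast; module
  IQ m n v := by
    rw [ρ.IQ (-m) (-n), neg_add m n]
  IP m n v := by
    simp only [LinearMap.neg_apply, map_neg]
    rw [ρ.IP (-m) (-n), neg_add m n]; module
  QP m n v := by
    simp only [LinearMap.neg_apply, map_neg]
    rw [ρ.QP (-m) (-n), neg_add m n]; push_cast; module
  QQ m n v := ρ.QQ _ _ _
  PP m n v := by
    simp only [LinearMap.neg_apply, map_neg]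
    rw [ρ.PP (-m) (-n)]
  ss := ρ.ss
  sD m v := by simp [ρ.sD]
  sI m v := by simp [ρ.sI]
  sP m v := by simp [ρ.sP]
  sQ m v := by simp [ρ.sQ]

/-- `v` is killed by the degree `n` part. -/
def Kil (ρ : WRep V) (n : ℤ) (v : V) : Prop :=
  ρ.D n v = 0 ∧ ρ.I n v = 0 ∧ ρ.P n v = 0 ∧ ρ.Q n v = 0

structure Stab (ρ : WRep V) (W : Submodule ℂ V) : Prop where
  D : ∀ (n : ℤ), ∀ v ∈ W, ρ.D n v ∈ W
  I : ∀ (n : ℤ), ∀ v ∈ W, ρ.I n v ∈ W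
  P : ∀ (n : ℤ), ∀ v ∈ W, ρ.P n v ∈ W
  Q : ∀ (n : ℤ), ∀ v ∈ W, ρ.Q n v ∈ W
  s : ∀ v ∈ W, ρ.s v ∈ W

structure Smp (ρ : WRep V) : Prop where
  nontriv : ¬ ∀ n v, ρ.Kil n v
  simple : ∀ W : Submodule ℂ V, ρ.Stab W → W = ⊥ ∨ W = ⊤

lemma Smp.top {ρ : WRep V} (h : ρ.Smp) {W : Submodule ℂ V} (hW : ρ.Stab W) {v : V}
    (hv : v ∈ W) (h0 : v ≠ 0) : W = ⊤ := by
  rcases h.simple W hW with h1 | h1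
  · subst h1; exact absurd ((mem_bot ℂ).1 hv) h0
  · exact h1

lemma flip_kil {ρ : WRep V} {n : ℤ} {v : V} : ρ.flip.Kil n v ↔ ρ.Kil (-n) v := by
  simp [Kil, flip]

lemma Smp.flip {ρ : WRep V} (h : ρ.Smp) : ρ.flip.Smp where
  nontriv hc := h.nontriv fun n v => by simpa using flip_kil.1 (hc (-n) v)
  simple W hW := h.simple W
    { D := fun n v hv => by simpa [WRep.flip] using hW.D (-n) v hv
      I := fun n v hv => by simpa [WRep.flip] using hW.I (-n) v hv
      P := fun n v hv => by simpa [WRep.flip] using hW.P (-n) v hv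
      Q := fun n v hv => by simpa [WRep.flip] using hW.Q (-n) v hv
      s := hW.s }

/-- weight space -/
def wt (ρ : WRep V) (μ : ℂ) : Submodule ℂ V := Module.End.eigenspace (ρ.D 0) μ

lemma mem_wt {ρ : WRep V} {μ : ℂ} {v : V} : v ∈ ρ.wt μ ↔ ρ.D 0 v = μ • v :=
  Module.End.mem_eigenspace_iff

lemma flip_wt (ρ : WRep V) (μ : ℂ) : ρ.flip.wt μ = ρ.wt (-μ) := by
  ext v
  simp only [mem_wt, flip, LinearMap.neg_apply, neg_zero, neg_smul]
  rw [neg_eq_iff_eq_neg]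

lemma D_wt {ρ : WRep V} {μ : ℂ} {v : V} (n : ℤ) (hv : v ∈ ρ.wt μ) : ρ.D n v ∈ ρ.wt (μ + n) := by
  rw [mem_wt] at *
  rw [ρ.DD, hv, map_smul, zero_add]; push_cast; module

lemma I_wt {ρ : WRep V} {μ : ℂ} {v : V} (n : ℤ) (hv : v ∈ ρ.wt μ) : ρ.I n v ∈ ρ.wt (μ + n) := by
  rw [mem_wt] at *
  rw [ρ.DI, hv, map_smul, zero_add]; module

lemma P_wt {ρ : WRep V} {μ : ℂ} {v : V} (n : ℤ) (hv : v ∈ ρ.wt μ) : ρ.P n v ∈ ρ.wt (μ + n) := by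
  rw [mem_wt] at *
  rw [ρ.DP, hv, map_smul, zero_add]; push_cast; module

lemma Q_wt {ρ : WRep V} {μ : ℂ} {v : V} (n : ℤ) (hv : v ∈ ρ.wt μ) : ρ.Q n v ∈ ρ.wt (μ + n) := by
  rw [mem_wt] at *
  rw [ρ.DQ, hv, map_smul, zero_add]; module

lemma s_wt {ρ : WRep V} {μ : ℂ} {v : V} (hv : v ∈ ρ.wt μ) : ρ.s v ∈ ρ.wt μ := by
  rw [mem_wt] at *
  rw [← ρ.sD, hv, map_smul]

lemma Kil.add {ρ : WRep V} {m n : ℤ} {v : V} (hn : n ≠ 0) (h1 : ρ.Kil m v) (h2 : ρ.Kil n v) :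
    ρ.Kil (m + n) v := by
  obtain ⟨a1, a2, a3, a4⟩ := h1
  obtain ⟨b1, b2, b3, b4⟩ := h2
  have hI : ρ.I (m + n) v = 0 := by
    have := ρ.DI m n v
    rw [a1, b2, map_zero, map_zero, zero_add] at this
    exact (smul_eq_zero.1 this.symm).resolve_left (by exact_mod_cast hn)
  refine ⟨?_, hI, ?_, ?_⟩
  · have := ρ.QP m n v
    rw [a4, b3, hI] at this
    simpa using this.symm
  · have := ρ.IP m n v
    rw [a2, b3] at this
    simpa using this.symm
  · have := ρ.IQ m n v
    rw [a2, b4] at this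
    simpa using this

lemma kil_large {ρ : WRep V} {j : ℕ} (hj : 1 ≤ j) {v : V} (h1 : ρ.Kil j v)
    (h2 : ρ.Kil ((j : ℤ) + 1) v) (n : ℕ) (hn : j * j ≤ n) : ρ.Kil n v := by
  have key : ∀ q : ℕ, 1 ≤ q → ∀ r : ℕ, r ≤ q → ρ.Kil ((q * j + r : ℕ) : ℤ) v := by
    intro q hq
    induction q, hq using Nat.le_induction with
    | base =>
      intro r hr
      interval_cases r
      · simpa using h1
      · simpa using h2
    | succ q hq ih =>
      intro r hr
      by_cases h : r ≤ q
      · have := Kil.add (by omega) (ih r h) h1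
        convert this using 1
        push_cast; ring
      · have hr' : r = q + 1 := by omega
        have := Kil.add (by omega) (ih q le_rfl) h2
        convert this using 1
        subst hr'
        push_cast; ring
  have h3 : j ≤ n / j := (Nat.le_div_iff_mul_le (by omega)).2 hn
  have h4 : n % j < j := Nat.mod_lt _ (by omega)
  have := key (n / j) (by omega) (n % j) (by omega)
  rwa [Nat.div_add_mod' n j] at this

lemma Kil.s {ρ : WRep V} {n : ℤ} {v : V} (h : ρ.Kil n v) : ρ.Kil n (ρ.s v) := by
  obtain ⟨a1, a2, a3, a4⟩ := h
  refine ⟨?_, ?_, ?_, ?_⟩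
  · rw [← ρ.sD, a1, map_zero]
  · rw [← ρ.sI, a2, map_zero]
  · have := ρ.sP n v
    rw [a3, map_zero] at this
    simpa using this.symm
  · have := ρ.sQ n v
    rw [a4, map_zero] at this
    simpa using this.symm

lemma Kil.apply {ρ : WRep V} {a n : ℤ} {v : V} (h : ρ.Kil n v) (h' : ρ.Kil (a + n) v) :
    ρ.Kil n (ρ.D a v) ∧ ρ.Kil n (ρ.I a v) ∧ ρ.Kil n (ρ.P a v) ∧ ρ.Kil n (ρ.Q a v) := by
  obtain ⟨a1, a2, a3, a4⟩ := h
  obtain ⟨b1, b2, b3, b4⟩ := h'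
  have hc : n + a = a + n := add_comm _ _
  refine ⟨⟨?_, ?_, ?_, ?_⟩, ⟨?_, ?_, ?_, ?_⟩, ⟨?_, ?_, ?_, ?_⟩, ⟨?_, ?_, ?_, ?_⟩⟩
  · rw [ρ.DD, a1, hc, b1]; simp
  · have := ρ.DI a n v; rw [a2, b2] at this; simpa using this.symm
  · have := ρ.DP a n v; rw [a3, b3] at this; simpa using this.symm
  · have := ρ.DQ a n v; rw [a4, b4] at this; simpa using this.symm
  · rw [ρ.DI, a1, hc, b2]; simp
  · rw [ρ.II, a2]; simp
  · have := ρ.IP a n v; rw [a3, b3] at this; simpa using this.symm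
  · have := ρ.IQ a n v; rw [a4, b4] at this; simpa using this.symm
  · rw [ρ.DP, a1, hc, b3]; simp
  · rw [ρ.IP, a2, hc, b3]; simp
  · rw [ρ.PP, a3]; simp
  · rw [ρ.QP, a4, hc, b1, b2]; simp
  · rw [ρ.DQ, a1, hc, b4]; simp
  · rw [ρ.IQ, a2, hc, b4]; simp
  · have := ρ.QP a n v; rw [a3, b1, b2] at this; simpa using this.symm
  · rw [ρ.QQ, a4]; simp

lemma Kil.lin {ρ : WRep V} {n : ℤ} {v w : V} (c : ℂ) (h : ρ.Kil n v) (h' : ρ.Kil n w) :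
    ρ.Kil n (c • v + w) := by
  obtain ⟨a1, a2, a3, a4⟩ := h
  obtain ⟨b1, b2, b3, b4⟩ := h'
  simp [Kil, *]

lemma kil_zero (ρ : WRep V) (n : ℤ) : ρ.Kil n 0 := by simp [Kil]

/-- vectors killed in all large degrees -/
def loc (ρ : WRep V) : Submodule ℂ V where
  carrier := {v | ∃ N : ℤ, ∀ n, N ≤ n → ρ.Kil n v}
  zero_mem' := ⟨0, fun n _ => ρ.kil_zero n⟩
  add_mem' := by
    rintro a b ⟨N, hN⟩ ⟨M, hM⟩
    refine ⟨max N M, fun n hn => ?_⟩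
    simpa using Kil.lin 1 (hN n (le_trans (le_max_left _ _) hn)) (hM n (le_trans (le_max_right _ _) hn))
  smul_mem' := by
    rintro c a ⟨N, hN⟩
    exact ⟨N, fun n hn => by simpa using Kil.lin c (hN n hn) (ρ.kil_zero n)⟩

lemma loc_stab (ρ : WRep V) : ρ.Stab ρ.loc := by
  have key : ∀ (a : ℤ) v, v ∈ ρ.loc → ∃ N : ℤ, ∀ n, N ≤ n → (ρ.Kil n (ρ.D a v) ∧
      ρ.Kil n (ρ.I a v) ∧ ρ.Kil n (ρ.P a v) ∧ ρ.Kil n (ρ.Q a v)) := by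
    rintro a v ⟨N, hN⟩
    refine ⟨N + |a|, fun n hn => Kil.apply (hN n ?_) (hN _ ?_)⟩
    · have := abs_nonneg a; omega
    · have := neg_abs_le a; omega
  refine ⟨?_, ?_, ?_, ?_, ?_⟩
  · intro a v hv
    obtain ⟨N, hN⟩ := key a v hv
    exact ⟨N, fun n hn => (hN n hn).1⟩
  · intro a v hv
    obtain ⟨N, hN⟩ := key a v hv
    exact ⟨N, fun n hn => (hN n hn).2.1⟩
  · intro a v hv
    obtain ⟨N, hN⟩ := key a v hv
    exact ⟨N, fun n hn => (hN n hn).2.2.1⟩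
  · intro a v hv
    obtain ⟨N, hN⟩ := key a v hv
    exact ⟨N, fun n hn => (hN n hn).2.2.2⟩
  · rintro v ⟨N, hN⟩
    exact ⟨N, fun n hn => (hN n hn).s⟩

lemma exists_uniform {ρ : WRep V} (hs : ρ.Smp) {v0 : V} (h0 : v0 ≠ 0) (hv0 : v0 ∈ ρ.loc)
    (μ : ℂ) [FiniteDimensional ℂ (ρ.wt μ)] :
    ∃ N : ℕ, ∀ v ∈ ρ.wt μ, ∀ n : ℤ, (N : ℤ) ≤ n → ρ.Kil n v := by
  have htop := hs.top ρ.loc_stab hv0 h0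
  obtain ⟨S, hS⟩ : (ρ.wt μ).FG := Module.Finite.iff_fg.1 inferInstance
  have hall : ∀ v : V, ∃ N : ℤ, ∀ n, N ≤ n → ρ.Kil n v := fun v => by
    have : v ∈ ρ.loc := htop ▸ mem_top
    exact this
  choose N hN using hall
  refine ⟨S.sup fun v => (N v).toNat, fun v hv n hn => ?_⟩
  rw [← hS] at hv
  induction hv using span_induction with
  | mem x hx =>
    refine hN x n ?_
    have h1 : (N x).toNat ≤ S.sup fun v => (N v).toNat :=
      Finset.le_sup (f := fun v => (N v).toNat) hx
    have h2 := Int.self_le_toNat (N x)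
    omega
  | zero => exact ρ.kil_zero n
  | add x y _ _ hx hy => simpa using Kil.lin 1 hx hy
  | smul c x _ hx => simpa using Kil.lin c hx (ρ.kil_zero n)

lemma kil_pos_of_one {ρ : WRep V} {v : V} (h : ρ.Kil 1 v) (n : ℤ) (hn : 0 < n) : ρ.Kil n v := by
  obtain ⟨k, rfl⟩ : ∃ k : ℕ, n = k + 1 := ⟨(n - 1).toNat, by omega⟩
  clear hn
  induction k with
  | zero => simpa using h
  | succ k ih => push_cast; exact Kil.add one_ne_zero ih h

lemma exists_sing {ρ : WRep V} (hs : ρ.Smp) {v0 : V} (h0 : v0 ≠ 0) (hv0 : v0 ∈ ρ.loc)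
    (μ : ℂ) [FiniteDimensional ℂ (ρ.wt μ)] (hμ : ρ.wt μ ≠ ⊥) :
    ∃ (ν : ℂ) (v : V), v ≠ 0 ∧ v ∈ ρ.wt ν ∧ ∀ n : ℤ, 0 < n → ρ.Kil n v := by
  obtain ⟨N, hN⟩ := exists_uniform hs h0 hv0 μ
  by_contra hcon
  push Not at hcon
  have key : ∀ k : ℕ, ∃ v : V, v ≠ 0 ∧ v ∈ ρ.wt (μ + k) ∧ ∀ n : ℤ, (N : ℤ) ≤ n → ρ.Kil n v := by
    intro k
    induction k with
    | zero =>
      obtain ⟨v, hv, hv'⟩ := (Submodule.ne_bot_iff _).1 hμ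
      exact ⟨v, hv', by simpa using hv, hN v hv⟩
    | succ k ih =>
      obtain ⟨v, hv, hw, hk⟩ := ih
      have h1 : ¬ ρ.Kil 1 v := by
        intro h
        obtain ⟨n, hn, hn'⟩ := hcon _ v hv hw
        exact hn' (kil_pos_of_one h n hn)
      have happ := fun n hn => Kil.apply (a := 1) (hk n hn) (hk (1 + n) (by omega))
      have hcast : μ + ((k + 1 : ℕ) : ℂ) = μ + k + ((1 : ℤ) : ℂ) := by push_cast; ring
      rw [hcast]
      by_cases hD : ρ.D 1 v = 0
      · by_cases hI : ρ.I 1 v = 0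
        · by_cases hP : ρ.P 1 v = 0
          · by_cases hQ : ρ.Q 1 v = 0
            · exact absurd ⟨hD, hI, hP, hQ⟩ h1
            · exact ⟨_, hQ, Q_wt 1 hw, fun n hn => (happ n hn).2.2.2⟩
          · exact ⟨_, hP, P_wt 1 hw, fun n hn => (happ n hn).2.2.1⟩
        · exact ⟨_, hI, I_wt 1 hw, fun n hn => (happ n hn).2.1⟩
      · exact ⟨_, hD, D_wt 1 hw, fun n hn => (happ n hn).1⟩
  obtain ⟨v, hv, hw, hk⟩ := key N
  obtain ⟨i, hi, hi'⟩ := hcon _ v hv hw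
  apply hi'
  have hback : μ + (N : ℂ) + ((-(N : ℤ) : ℤ) : ℂ) = μ := by push_cast; ring
  have hi2 : (N : ℤ) ≤ N + i := by omega
  have hidx : -(N : ℤ) + (N + i) = i := by ring
  have hv1 := hk _ hi2
  have hD := hN _ (hback ▸ D_wt (-(N : ℤ)) hw) _ hi2
  have hI := hN _ (hback ▸ I_wt (-(N : ℤ)) hw) _ hi2
  have hQ := hN _ (hback ▸ Q_wt (-(N : ℤ)) hw) _ hi2
  have hI0 : ρ.I i v = 0 := by
    have := ρ.DI (-(N : ℤ)) (N + i) v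
    rw [hv1.2.1, hD.2.1, hidx, map_zero, zero_add] at this
    refine (smul_eq_zero.1 this.symm).resolve_left ?_
    have : (N : ℤ) + i ≠ 0 := by omega
    exact_mod_cast this
  refine ⟨?_, hI0, ?_, ?_⟩
  · have := ρ.QP (-(N : ℤ)) (N + i) v
    rw [hv1.2.2.1, hQ.2.2.1, hidx, hI0] at this
    simpa using this.symm
  · have := ρ.IP (-(N : ℤ)) (N + i) v
    rw [hv1.2.2.1, hI.2.2.1, hidx] at this
    simpa using this.symm
  · have := ρ.IQ (-(N : ℤ)) (N + i) v
    rw [hv1.2.2.2, hI.2.2.2, hidx] at this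
    simpa using this

/-- dimension bound from one side -/
lemma finrank_bound {ρ : WRep V} (hs : ρ.Smp) (hfin : ∀ μ, FiniteDimensional ℂ (ρ.wt μ))
    (hno : ¬ ∃ (ν : ℂ) (v : V), v ≠ 0 ∧ v ∈ ρ.wt ν ∧ ∀ n : ℤ, 0 < n → ρ.Kil n v)
    (μ : ℂ) (j : ℕ) (hj : 1 ≤ j) :
    Module.finrank ℂ (ρ.wt (μ - j)) ≤
      4 * Module.finrank ℂ (ρ.wt μ) + 4 * Module.finrank ℂ (ρ.wt (μ + 1)) := by
  have := hfin
  let X := ρ.wt (μ - j)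
  have hw : ∀ (x : X), (x : V) ∈ ρ.wt (μ - j) := fun x => x.2
  have e1 : μ - j + ((j : ℤ) : ℂ) = μ := by push_cast; ring
  have e2 : μ - j + (((j : ℤ) + 1 : ℤ) : ℂ) = μ + 1 := by push_cast; ring
  let mk := fun (T : V →ₗ[ℂ] V) (ν : ℂ) (h : ∀ x ∈ ρ.wt (μ - j), T x ∈ ρ.wt ν) =>
    (T.restrict h : X →ₗ[ℂ] ρ.wt ν)
  let f1 := mk (ρ.D j) μ (fun x hx => e1 ▸ D_wt (j : ℤ) hx)
  let f2 := mk (ρ.I j) μ (fun x hx => e1 ▸ I_wt (j : ℤ) hx)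
  let f3 := mk (ρ.P j) μ (fun x hx => e1 ▸ P_wt (j : ℤ) hx)
  let f4 := mk (ρ.Q j) μ (fun x hx => e1 ▸ Q_wt (j : ℤ) hx)
  let g1 := mk (ρ.D (j + 1)) (μ + 1) (fun x hx => e2 ▸ D_wt ((j : ℤ) + 1) hx)
  let g2 := mk (ρ.I (j + 1)) (μ + 1) (fun x hx => e2 ▸ I_wt ((j : ℤ) + 1) hx)
  let g3 := mk (ρ.P (j + 1)) (μ + 1) (fun x hx => e2 ▸ P_wt ((j : ℤ) + 1) hx)
  let g4 := mk (ρ.Q (j + 1)) (μ + 1) (fun x hx => e2 ▸ Q_wt ((j : ℤ) + 1) hx)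
  let F := ((f1.prod f2).prod (f3.prod f4)).prod ((g1.prod g2).prod (g3.prod g4))
  have hF : Function.Injective F := by
    rw [← LinearMap.ker_eq_bot, LinearMap.ker_eq_bot']
    intro x hx
    simp only [F, LinearMap.prod_apply, Function.prod, Prod.mk_eq_zero] at hx
    obtain ⟨⟨⟨h1, h2⟩, h3, h4⟩, ⟨h5, h6⟩, h7, h8⟩ := hx
    by_contra hne
    have hx0 : (x : V) ≠ 0 := fun h => hne (Subtype.ext h)
    have k1 : ρ.Kil j (x : V) := ⟨congrArg Subtype.val h1, congrArg Subtype.val h2,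
      congrArg Subtype.val h3, congrArg Subtype.val h4⟩
    have k2 : ρ.Kil ((j : ℤ) + 1) (x : V) := ⟨congrArg Subtype.val h5, congrArg Subtype.val h6,
      congrArg Subtype.val h7, congrArg Subtype.val h8⟩
    refine hno (exists_sing hs hx0 ⟨(j * j : ℕ), fun n hn => ?_⟩ (μ - j) ?_)
    · obtain ⟨m, rfl⟩ : ∃ m : ℕ, n = m := ⟨n.toNat, by omega⟩
      exact kil_large hj k1 k2 m (by exact_mod_cast hn)
    · exact (Submodule.ne_bot_iff _).2 ⟨x, x.2, hx0⟩
  have := LinearMap.finrank_le_finrank_of_injective hF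
  simp only [Module.finrank_prod] at this
  change Module.finrank ℂ X ≤ _
  omega

/-- an extremal vector can be chosen homogeneous, killed by `F`, and an `I 0` eigenvector -/
lemma refine_vec {ρ : WRep V} (hfin : ∀ μ, FiniteDimensional ℂ (ρ.wt μ)) (A : Set ℤ)
    (F : V →ₗ[ℂ] V)
    (hF : F = ρ.P 0 ∨ F = ρ.Q 0) {ν : ℂ} {v : V} (hv : v ≠ 0) (hw : v ∈ ρ.wt ν)
    (hk : ∀ n ∈ A, ρ.Kil n v) :
    ∃ (w : V) (a ε : ℂ), w ≠ 0 ∧ w ∈ ρ.wt ν ∧ (∀ n ∈ A, ρ.Kil n w) ∧ F w = 0 ∧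
      ρ.I 0 w = a • w ∧ ρ.s w = ε • w ∧ (ε = 1 ∨ ε = -1) := by
  have hF2 : ∀ x, F (F x) = 0 := by
    intro x
    rcases hF with rfl | rfl
    · exact zero_of_eq_neg (ρ.PP 0 0 x)
    · exact zero_of_eq_neg (ρ.QQ 0 0 x)
  have hFs : ∀ x, F x = 0 → F (ρ.s x) = 0 := by
    intro x hx
    rcases hF with rfl | rfl
    · have := ρ.sP 0 x; rw [hx, map_zero] at this; simpa using this.symm
    · have := ρ.sQ 0 x; rw [hx, map_zero] at this; simpa using this.symm
  have hFI : ∀ x, F x = 0 → F (ρ.I 0 x) = 0 := by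
    intro x hx
    rcases hF with rfl | rfl
    · have := ρ.IP 0 0 x; rw [add_zero, hx, map_zero] at this; simpa using this.symm
    · have := ρ.IQ 0 0 x; rw [add_zero, hx, map_zero] at this; simpa using this.symm
  have hFk : ∀ x ∈ ρ.wt ν, (∀ n ∈ A, ρ.Kil n x) → F x ∈ ρ.wt ν ∧ ∀ n ∈ A, ρ.Kil n (F x) := by
    intro x hx hkx
    have h2 := fun n hn => Kil.apply (a := 0) (hkx n hn) (by simpa using hkx n hn)
    rcases hF with rfl | rfl
    · exact ⟨by simpa using P_wt 0 hx, fun n hn => (h2 n hn).2.2.1⟩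
    · exact ⟨by simpa using Q_wt 0 hx, fun n hn => (h2 n hn).2.2.2⟩
  -- killed by F
  obtain ⟨v1, hv1, hw1, hk1, hF1⟩ : ∃ v1 : V, v1 ≠ 0 ∧ v1 ∈ ρ.wt ν ∧ (∀ n ∈ A, ρ.Kil n v1) ∧
      F v1 = 0 := by
    by_cases h : F v = 0
    · exact ⟨v, hv, hw, hk, h⟩
    · exact ⟨F v, h, (hFk v hw hk).1, (hFk v hw hk).2, hF2 v⟩
  -- homogeneous
  obtain ⟨v2, ε, hv2, hw2, hk2, hF2', hε, hε'⟩ : ∃ (v2 : V) (ε : ℂ), v2 ≠ 0 ∧ v2 ∈ ρ.wt ν ∧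
      (∀ n ∈ A, ρ.Kil n v2) ∧ F v2 = 0 ∧ ρ.s v2 = ε • v2 ∧ (ε = 1 ∨ ε = -1) := by
    by_cases h : v1 + ρ.s v1 = 0
    · exact ⟨v1, -1, hv1, hw1, hk1, hF1, by
        rw [neg_one_smul]; exact (neg_eq_of_add_eq_zero_right h).symm, Or.inr rfl⟩
    · refine ⟨v1 + ρ.s v1, 1, h, add_mem hw1 (s_wt hw1), fun n hn => ?_, ?_, ?_, Or.inl rfl⟩
      · simpa using Kil.lin 1 (hk1 n hn) (hk1 n hn).s
      · rw [map_add, hF1, hFs _ hF1, add_zero]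
      · rw [map_add, ρ.ss, one_smul, add_comm]
  let T : Submodule ℂ V :=
    { carrier := {x | x ∈ ρ.wt ν ∧ (∀ n ∈ A, ρ.Kil n x) ∧ F x = 0 ∧ ρ.s x = ε • x}
      zero_mem' := ⟨zero_mem _, fun n _ => ρ.kil_zero n, by simp, by simp⟩
      add_mem' := by
        rintro a b ⟨a1, a2, a3, a4⟩ ⟨b1, b2, b3, b4⟩
        exact ⟨add_mem a1 b1, fun n hn => by simpa using Kil.lin 1 (a2 n hn) (b2 n hn),
          by rw [map_add, a3, b3, add_zero], by rw [map_add, a4, b4, smul_add]⟩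
      smul_mem' := by
        rintro c a ⟨a1, a2, a3, a4⟩
        exact ⟨smul_mem _ c a1, fun n hn => by simpa using Kil.lin c (a2 n hn) (ρ.kil_zero n),
          by rw [map_smul, a3, smul_zero], by rw [map_smul, a4, smul_comm]⟩ }
  have hTle : T ≤ ρ.wt ν := fun x hx => hx.1
  have := hfin ν
  have hTfin : FiniteDimensional ℂ T := Submodule.finiteDimensional_of_le hTle
  have hTn : Nontrivial T := ⟨⟨v2, hw2, hk2, hF2', hε⟩, 0, fun h => hv2 (congrArg Subtype.val h)⟩
  have hTI : ∀ x ∈ T, ρ.I 0 x ∈ T := by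
    rintro x ⟨a1, a2, a3, a4⟩
    refine ⟨by simpa using I_wt 0 a1, fun n hn => ?_, hFI x a3, ?_⟩
    · exact (Kil.apply (a := 0) (a2 n hn) (by simpa using a2 n hn)).2.1
    · rw [ρ.sI, a4, map_smul]
  obtain ⟨a, ha⟩ := Module.End.exists_eigenvalue ((ρ.I 0).restrict hTI)
  obtain ⟨w, hw'⟩ := ha.exists_hasEigenvector
  obtain ⟨b1, b2, b3, b4⟩ := w.2
  exact ⟨w, a, ε, fun h => hw'.2 (Subtype.ext h), b1, b2, b3,
    congrArg Subtype.val hw'.apply_eq_smul, b4, hε'⟩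

/-! ### Levels -/

/-- the levels generated from a subspace by the operators `P n` -/
def lev (ρ : WRep V) (K : Submodule ℂ V) : ℕ → Submodule ℂ V
  | 0 => K
  | i + 1 => ⨆ n : ℤ, (ρ.lev K i).map (ρ.P n)

lemma P_lev {ρ : WRep V} {K : Submodule ℂ V} {i : ℕ} (n : ℤ) {v : V} (hv : v ∈ ρ.lev K i) :
    ρ.P n v ∈ ρ.lev K (i + 1) :=
  mem_iSup_of_mem n (mem_map_of_mem hv)

lemma lev_succ_le {ρ : WRep V} {K W : Submodule ℂ V} {i : ℕ}
    (h : ∀ n : ℤ, ∀ v ∈ ρ.lev K i, ρ.P n v ∈ W) : ρ.lev K (i + 1) ≤ W := by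
  refine iSup_le fun n => ?_
  rintro _ ⟨v, hv, rfl⟩
  exact h n v hv

/-- data for a lowest level -/
structure Base (ρ : WRep V) (h : ℂ) (K : Submodule ℂ V) : Prop where
  eig : ∀ v ∈ K, ρ.I 0 v = h • v
  D : ∀ (n : ℤ), ∀ v ∈ K, ρ.D n v ∈ K
  I : ∀ (n : ℤ), ∀ v ∈ K, ρ.I n v ∈ K
  Q : ∀ (n : ℤ), ∀ v ∈ K, ρ.Q n v = 0
  s : ∀ v ∈ K, ρ.s v ∈ K

namespace Base

variable {ρ : WRep V} {h : ℂ} {K : Submodule ℂ V}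

lemma lev_D (hK : ρ.Base h K) (i : ℕ) (m : ℤ) : ∀ v ∈ ρ.lev K i, ρ.D m v ∈ ρ.lev K i := by
  induction i with
  | zero => exact hK.D m
  | succ i ih =>
    refine lev_succ_le (W := (ρ.lev K (i + 1)).comap (ρ.D m)) fun n v hv => ?_
    rw [mem_comap, ρ.DP]
    exact add_mem (P_lev n (ih v hv)) (smul_mem _ _ (P_lev _ hv))

lemma lev_I (hK : ρ.Base h K) (i : ℕ) (m : ℤ) : ∀ v ∈ ρ.lev K i, ρ.I m v ∈ ρ.lev K i := by
  induction i with
  | zero => exact hK.I m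
  | succ i ih =>
    refine lev_succ_le (W := (ρ.lev K (i + 1)).comap (ρ.I m)) fun n v hv => ?_
    rw [mem_comap, ρ.IP]
    exact add_mem (P_lev n (ih v hv)) (P_lev _ hv)

lemma lev_s (hK : ρ.Base h K) (i : ℕ) : ∀ v ∈ ρ.lev K i, ρ.s v ∈ ρ.lev K i := by
  induction i with
  | zero => exact hK.s
  | succ i ih =>
    refine lev_succ_le (W := (ρ.lev K (i + 1)).comap ρ.s) fun n v hv => ?_
    rw [mem_comap, ρ.sP]
    exact neg_mem (P_lev n (ih v hv))

lemma lev_Q (hK : ρ.Base h K) (i : ℕ) (m : ℤ) :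
    ∀ v ∈ ρ.lev K (i + 1), ρ.Q m v ∈ ρ.lev K i := by
  induction i with
  | zero =>
    refine lev_succ_le (W := (ρ.lev K 0).comap (ρ.Q m)) fun n v hv => ?_
    rw [mem_comap, ρ.QP, hK.Q m v hv, map_zero, neg_zero, zero_add]
    exact add_mem (hK.lev_D 0 _ v hv) (smul_mem _ _ (hK.lev_I 0 _ v hv))
  | succ i ih =>
    refine lev_succ_le (W := (ρ.lev K (i + 1)).comap (ρ.Q m)) fun n v hv => ?_
    rw [mem_comap, ρ.QP]
    exact add_mem (add_mem (neg_mem (P_lev _ (ih v hv))) (hK.lev_D _ _ v hv))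
      (smul_mem _ _ (hK.lev_I _ _ v hv))

lemma lev_eig (hK : ρ.Base h K) (i : ℕ) : ∀ v ∈ ρ.lev K i, ρ.I 0 v = (h + i) • v := by
  induction i with
  | zero =>
    intro v hv
    have := hK.eig v hv
    simpa using this
  | succ i ih =>
    have : ρ.lev K (i + 1) ≤ Module.End.eigenspace (ρ.I 0) (h + (i + 1 : ℕ)) := by
      refine lev_succ_le fun n v hv => ?_
      rw [Module.End.mem_eigenspace_iff, ρ.IP, ih v hv, map_smul, zero_add]
      push_cast; module
    intro v hv
    exact Module.End.mem_eigenspace_iff.1 (this hv)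

lemma stab (hK : ρ.Base h K) : ρ.Stab (⨆ i, ρ.lev K i) := by
  have key : ∀ T : V →ₗ[ℂ] V, (∀ i, ∀ v ∈ ρ.lev K i, T v ∈ ⨆ i, ρ.lev K i) →
      ∀ v ∈ ⨆ i, ρ.lev K i, T v ∈ ⨆ i, ρ.lev K i := by
    intro T hT
    have : (⨆ i, ρ.lev K i) ≤ (⨆ i, ρ.lev K i).comap T := iSup_le fun i v hv => hT i v hv
    exact this
  refine ⟨fun n => key _ fun i v hv => mem_iSup_of_mem i (hK.lev_D i n v hv),
    fun n => key _ fun i v hv => mem_iSup_of_mem i (hK.lev_I i n v hv),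
    fun n => key _ fun i v hv => mem_iSup_of_mem (i + 1) (P_lev n hv),
    fun n => key _ fun i v hv => ?_,
    key _ fun i v hv => mem_iSup_of_mem i (hK.lev_s i v hv)⟩
  cases i with
  | zero => rw [hK.Q n v hv]; exact zero_mem _
  | succ i => exact mem_iSup_of_mem i (hK.lev_Q i n v hv)

lemma top (hK : ρ.Base h K) (hs : ρ.Smp) (h0 : K ≠ ⊥) : (⨆ i, ρ.lev K i) = ⊤ := by
  obtain ⟨v, hv, hv'⟩ := (Submodule.ne_bot_iff _).1 h0
  exact hs.top hK.stab (mem_iSup_of_mem 0 hv) hv'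

lemma mem_span (hK : ρ.Base h K) (hs : ρ.Smp) (h0 : K ≠ ⊥) (c : ℂ) (v : V)
    (hv : ρ.I 0 v = c • v) :
    v ∈ span ℂ {x | (∃ i, x ∈ ρ.lev K i) ∧ ρ.I 0 x = c • x} := by
  refine mem_span_eig (ρ.I 0) {x | ∃ i, x ∈ ρ.lev K i} ?_ v ?_ c hv
  · rintro x ⟨i, hx⟩; exact ⟨_, hK.lev_eig i x hx⟩
  · have : (⊤ : Submodule ℂ V) ≤ span ℂ {x | ∃ i, x ∈ ρ.lev K i} := by
      rw [← hK.top hs h0]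
      exact iSup_le fun i x hx => subset_span ⟨i, hx⟩
    exact this mem_top

lemma eq_eig (hK : ρ.Base h K) (hs : ρ.Smp) (h0 : K ≠ ⊥) (v : V) (hv : ρ.I 0 v = h • v) :
    v ∈ K := by
  refine span_le.2 ?_ (hK.mem_span hs h0 h v hv)
  rintro x ⟨⟨i, hx⟩, hx'⟩
  have h1 := hK.lev_eig i x hx
  cases i with
  | zero => exact hx
  | succ i =>
    rw [hx', ← sub_eq_zero, ← sub_smul] at h1
    have : x = 0 := by
      refine (smul_eq_zero.1 h1).resolve_left ?_
      rw [sub_add_cancel_left, neg_eq_zero]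
      exact_mod_cast Nat.succ_ne_zero i
    rw [this]; exact zero_mem _

lemma eig_pred (hK : ρ.Base h K) (hs : ρ.Smp) (h0 : K ≠ ⊥) (v : V)
    (hv : ρ.I 0 v = (h - 1) • v) : v = 0 := by
  have : v ∈ (⊥ : Submodule ℂ V) := by
    refine span_le.2 ?_ (hK.mem_span hs h0 _ v hv)
    rintro x ⟨⟨i, hx⟩, hx'⟩
    have h1 := hK.lev_eig i x hx
    rw [hx', ← sub_eq_zero, ← sub_smul] at h1
    refine (smul_eq_zero.1 h1).resolve_left ?_
    have : h - 1 - (h + i) = -((i + 1 : ℕ) : ℂ) := by push_cast; ring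
    rw [this, neg_eq_zero]
    exact_mod_cast Nat.succ_ne_zero i
  exact (mem_bot ℂ).1 this

/-- a vector at level one killed by all `Q` vanishes -/
lemma lev_one (hK : ρ.Base h K) (hs : ρ.Smp) (h0 : K ≠ ⊥) (w : V) (hw : w ∈ ρ.lev K 1)
    (hQ : ∀ n, ρ.Q n w = 0) : w = 0 := by
  by_contra hne
  let K1 : Submodule ℂ V := ρ.lev K 1 ⊓ ⨅ n, LinearMap.ker (ρ.Q n)
  have hm : ∀ x, x ∈ K1 ↔ x ∈ ρ.lev K 1 ∧ ∀ n, ρ.Q n x = 0 := by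
    intro x; simp [K1, mem_inf, mem_iInf]
  have hB : ρ.Base (h + 1) K1 := by
    constructor
    · intro v hv; simpa using hK.lev_eig 1 v ((hm v).1 hv).1
    · intro n v hv
      obtain ⟨a, b⟩ := (hm v).1 hv
      refine (hm _).2 ⟨hK.lev_D 1 n v a, fun m => ?_⟩
      have := ρ.DQ n m v
      rw [b, b] at this; simpa using this.symm
    · intro n v hv
      obtain ⟨a, b⟩ := (hm v).1 hv
      refine (hm _).2 ⟨hK.lev_I 1 n v a, fun m => ?_⟩
      have := ρ.IQ n m v
      rw [b, b] at this; simpa using this.symm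
    · intro n v hv; exact ((hm v).1 hv).2 n
    · intro v hv
      obtain ⟨a, b⟩ := (hm v).1 hv
      refine (hm _).2 ⟨hK.lev_s 1 v a, fun m => ?_⟩
      have := ρ.sQ m v
      rw [b] at this; simpa using this.symm
  have hne1 : K1 ≠ ⊥ := (Submodule.ne_bot_iff _).2 ⟨w, (hm w).2 ⟨hw, hQ⟩, hne⟩
  obtain ⟨v, hv, hv'⟩ := (Submodule.ne_bot_iff _).1 h0
  exact hv' (hB.eig_pred hs hne1 v (by simpa using hK.eig v hv))

end Base

/-! ### The explicit lowest level -/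

/-- joint eigenspaces -/
def Jt (ρ : WRep V) (h μ : ℂ) : Submodule ℂ V := Module.End.eigenspace (ρ.I 0) h ⊓ ρ.wt μ

lemma mem_Jt {ρ : WRep V} {h μ : ℂ} {v : V} :
    v ∈ ρ.Jt h μ ↔ ρ.I 0 v = h • v ∧ ρ.D 0 v = μ • v := by
  rw [Jt, mem_inf, Module.End.mem_eigenspace_iff, mem_wt]

/-- joint eigenspaces with parity -/
def Je (ρ : WRep V) (h μ ε : ℂ) : Submodule ℂ V := ρ.Jt h μ ⊓ Module.End.eigenspace ρ.s ε

lemma mem_Je {ρ : WRep V} {h μ ε : ℂ} {v : V} :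
    v ∈ ρ.Je h μ ε ↔ ρ.I 0 v = h • v ∧ ρ.D 0 v = μ • v ∧ ρ.s v = ε • v := by
  rw [Je, mem_inf, mem_Jt, Module.End.mem_eigenspace_iff, and_assoc]

lemma D_Je {ρ : WRep V} {h μ ε : ℂ} {v : V} (n : ℤ) (hv : v ∈ ρ.Je h μ ε) :
    ρ.D n v ∈ ρ.Je h (μ + n) ε := by
  rw [mem_Je] at *
  refine ⟨?_, mem_wt.1 (D_wt n (mem_wt.2 hv.2.1)), by rw [ρ.sD, hv.2.2, map_smul]⟩
  have := ρ.DI n 0 v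
  rw [hv.1, map_smul] at this
  simpa using this.symm

lemma I_Je {ρ : WRep V} {h μ ε : ℂ} {v : V} (n : ℤ) (hv : v ∈ ρ.Je h μ ε) :
    ρ.I n v ∈ ρ.Je h (μ + n) ε := by
  rw [mem_Je] at *
  exact ⟨by rw [ρ.II, hv.1, map_smul], mem_wt.1 (I_wt n (mem_wt.2 hv.2.1)),
    by rw [ρ.sI, hv.2.2, map_smul]⟩

/-- the twisted operators on sequences -/
def Eop (ρ : WRep V) (l : ℂ) (a : ℤ) : (ℤ → V) →ₗ[ℂ] (ℤ → V) where
  toFun x m := ρ.D a (x (m - a)) - (l + m - a) • x m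
  map_add' x y := by ext m; simp only [Pi.add_apply, map_add]; module
  map_smul' c x := by ext m; simp only [Pi.smul_apply, map_smul, RingHom.id_apply]; module

def Iop (ρ : WRep V) (a : ℤ) : (ℤ → V) →ₗ[ℂ] (ℤ → V) where
  toFun x m := ρ.I a (x (m - a))
  map_add' x y := by ext m; simp only [Pi.add_apply, map_add]
  map_smul' c x := by ext m; simp only [Pi.smul_apply, map_smul, RingHom.id_apply]

lemma Eop_apply (ρ : WRep V) (l : ℂ) (a : ℤ) (x : ℤ → V) (m : ℤ) :
    ρ.Eop l a x m = ρ.D a (x (m - a)) - (l + m - a) • x m := rfl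

lemma Iop_apply (ρ : WRep V) (a : ℤ) (x : ℤ → V) (m : ℤ) :
    ρ.Iop a x m = ρ.I a (x (m - a)) := rfl

lemma Eop_Eop (ρ : WRep V) (l : ℂ) (a b : ℤ) (x : ℤ → V) : ρ.Eop l a (ρ.Eop l b x) =
    ρ.Eop l b (ρ.Eop l a x) + (a : ℂ) • ρ.Eop l a x - (b : ℂ) • ρ.Eop l b x
      + ((b : ℂ) - a) • ρ.Eop l (a + b) x := by
  ext m
  simp only [Eop_apply, Pi.add_apply, Pi.sub_apply, Pi.smul_apply, map_sub, map_smul]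
  rw [ρ.DD a b, show m - b - a = m - a - b by ring, show m - (a + b) = m - a - b by ring]
  push_cast
  module

lemma Eop_Iop (ρ : WRep V) (l : ℂ) (a b : ℤ) (x : ℤ → V) : ρ.Eop l a (ρ.Iop b x) =
    ρ.Iop b (ρ.Eop l a x) + (b : ℂ) • (ρ.Iop (a + b) x - ρ.Iop b x) := by
  ext m
  simp only [Eop_apply, Iop_apply, Pi.add_apply, Pi.sub_apply, Pi.smul_apply, map_sub, map_smul]
  rw [ρ.DI a b, show m - b - a = m - a - b by ring, show m - (a + b) = m - a - b by ring]
  push_cast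
  module

/-- sequences attached to `v` -/
def sI' (ρ : WRep V) (n : ℤ) (v : V) : ℤ → V := fun m => ρ.I (m + n) v

def sM (ρ : WRep V) (n : ℤ) (v : V) : ℤ → V := fun m => ρ.D (m + n) v + (m : ℂ) • ρ.I (m + n) v

def USet (ρ : WRep V) (h l ε : ℂ) : Set (ℤ → V) :=
  {x | ∃ (n : ℤ) (v : V), v ∈ ρ.Je h (l - n) ε ∧ (x = ρ.sI' n v ∨ x = ρ.sM n v)}

lemma U_stab (ρ : WRep V) (h l ε : ℂ) (a : ℤ) :
    (∀ x ∈ span ℂ (ρ.USet h l ε), ρ.Eop l a x ∈ span ℂ (ρ.USet h l ε)) ∧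
    (∀ x ∈ span ℂ (ρ.USet h l ε), ρ.Iop a x ∈ span ℂ (ρ.USet h l ε)) := by
  have hI : ∀ (n : ℤ) (v : V), v ∈ ρ.Je h (l - n) ε → ρ.sI' n v ∈ span ℂ (ρ.USet h l ε) :=
    fun n v hv => subset_span ⟨n, v, hv, Or.inl rfl⟩
  have hM : ∀ (n : ℤ) (v : V), v ∈ ρ.Je h (l - n) ε → ρ.sM n v ∈ span ℂ (ρ.USet h l ε) :=
    fun n v hv => subset_span ⟨n, v, hv, Or.inr rfl⟩
  have hc : ∀ n : ℤ, l - n + (a : ℂ) = l - ((n - a : ℤ) : ℂ) := fun n => by push_cast; ring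
  constructor
  · change span ℂ (ρ.USet h l ε) ≤ (span ℂ (ρ.USet h l ε)).comap (ρ.Eop l a)
    rw [span_le]
    rintro x ⟨n, v, hv, rfl | rfl⟩
    · have hDv := D_Je a hv
      rw [hc] at hDv
      have : ρ.Eop l a (ρ.sI' n v) = ρ.sI' (n - a) (ρ.D a v) + ((n : ℂ) - l) • ρ.sI' n v := by
        ext m
        simp only [Eop_apply, sI', Pi.add_apply, Pi.smul_apply]
        rw [ρ.DI, show a + (m - a + n) = m + n by ring, show m - a + n = m + (n - a) by ring]
        push_cast; module
      rw [SetLike.mem_coe, mem_comap, this]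
      exact add_mem (hI _ _ hDv) (smul_mem _ _ (hI _ _ hv))
    · have hDv := D_Je a hv
      rw [hc] at hDv
      have : ρ.Eop l a (ρ.sM n v) = ρ.sM (n - a) (ρ.D a v) - (a : ℂ) • ρ.sI' (n - a) (ρ.D a v)
          + ((n : ℂ) - a - l) • ρ.sM n v + ((a : ℂ) ^ 2 - a * n) • ρ.sI' n v := by
        ext m
        simp only [Eop_apply, sI', sM, Pi.add_apply, Pi.smul_apply, Pi.sub_apply, map_add, map_smul]
        rw [ρ.DI, ρ.DD, show a + (m - a + n) = m + n by ring, show m - a + n = m + (n - a) by ring]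
        push_cast; module
      rw [SetLike.mem_coe, mem_comap, this]
      exact add_mem (add_mem (sub_mem (hM _ _ hDv) (smul_mem _ _ (hI _ _ hDv)))
        (smul_mem _ _ (hM _ _ hv))) (smul_mem _ _ (hI _ _ hv))
  · change span ℂ (ρ.USet h l ε) ≤ (span ℂ (ρ.USet h l ε)).comap (ρ.Iop a)
    rw [span_le]
    rintro x ⟨n, v, hv, rfl | rfl⟩
    · have hDv := I_Je a hv
      rw [hc] at hDv
      have : ρ.Iop a (ρ.sI' n v) = ρ.sI' (n - a) (ρ.I a v) := by
        ext m
        simp only [Iop_apply, sI']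
        rw [ρ.II, show m - a + n = m + (n - a) by ring]
      rw [SetLike.mem_coe, mem_comap, this]
      exact hI _ _ hDv
    · have hDv := I_Je a hv
      rw [hc] at hDv
      have : ρ.Iop a (ρ.sM n v) = ρ.sM (n - a) (ρ.I a v) - (a : ℂ) • ρ.sI' (n - a) (ρ.I a v)
          - (a : ℂ) • ρ.sI' n v := by
        ext m
        simp only [Iop_apply, sI', sM, Pi.smul_apply, Pi.sub_apply, map_add, map_smul]
        have h1 := ρ.DI (m - a + n) a v
        rw [show m - a + n + a = m + n by ring] at h1
        rw [ρ.II a, show m + (n - a) = m - a + n by ring, h1]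
        push_cast; module
      rw [SetLike.mem_coe, mem_comap, this]
      exact sub_mem (sub_mem (hM _ _ hDv) (smul_mem _ _ (hI _ _ hDv))) (smul_mem _ _ (hI _ _ hv))

/-- finite dimensionality of the space of sequences -/
lemma U_fin {ρ : WRep V} (hfin : ∀ μ, FiniteDimensional ℂ (ρ.wt μ)) (h l ε : ℂ)
    (hQ : ∀ (n m : ℤ), ∀ v ∈ ρ.Je h (l + m) ε, ρ.Q n v = 0) :
    FiniteDimensional ℂ (span ℂ (ρ.USet h l ε)) := by
  let Φ : ℤ → V →ₗ[ℂ] (ℤ → V) := fun k => LinearMap.pi fun m => ρ.Q (m - k)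
  have := hfin l
  have := hfin (l + 1)
  have hle : span ℂ (ρ.USet h l ε) ≤ (ρ.wt l).map (Φ 0) ⊔ (ρ.wt (l + 1)).map (Φ 1) := by
    rw [span_le]
    have hM : ∀ (n : ℤ) (v : V), v ∈ ρ.Je h (l - n) ε → ρ.sM n v = Φ 0 (ρ.P n v) ∧
        ρ.sM n v - ρ.sI' n v = Φ 1 (ρ.P (n + 1) v) ∧ ρ.P n v ∈ ρ.wt l ∧
        ρ.P (n + 1) v ∈ ρ.wt (l + 1) := by
      intro n v hv
      have hq : ∀ m, ρ.Q m v = 0 := fun m => hQ m (-n) v (by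
        rw [show l + ((-n : ℤ) : ℂ) = l - n by push_cast; ring]; exact hv)
      have hw : v ∈ ρ.wt (l - n) := hv.1.2
      refine ⟨?_, ?_, ?_, ?_⟩
      · ext m
        simp only [Φ, LinearMap.pi_apply, sM, sub_zero]
        rw [ρ.QP, hq, map_zero, neg_zero, zero_add]
      · ext m
        simp only [Φ, LinearMap.pi_apply, sM, sI', Pi.sub_apply]
        rw [ρ.QP, hq, map_zero, neg_zero, zero_add, show m - 1 + (n + 1) = m + n by ring]
        push_cast; module
      · have := P_wt n hw
        rwa [sub_add_cancel] at this
      · have := P_wt (n + 1) hw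
        rwa [show l - (n : ℂ) + ((n + 1 : ℤ) : ℂ) = l + 1 by push_cast; ring] at this
    rintro x ⟨n, v, hv, rfl | rfl⟩
    · obtain ⟨h1, h2, h3, h4⟩ := hM n v hv
      have : ρ.sI' n v = Φ 0 (ρ.P n v) - Φ 1 (ρ.P (n + 1) v) := by
        rw [← h1, ← h2]; abel
      rw [this]
      exact sub_mem (mem_sup_left (mem_map_of_mem h3)) (mem_sup_right (mem_map_of_mem h4))
    · obtain ⟨h1, h2, h3, h4⟩ := hM n v hv
      rw [h1]
      exact mem_sup_left (mem_map_of_mem h3)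
  exact Submodule.finiteDimensional_of_le hle

lemma U_mem {ρ : WRep V} {h l ε : ℂ} {x : ℤ → V} (hx : x ∈ span ℂ (ρ.USet h l ε)) (m : ℤ) :
    x m ∈ ρ.Je h (l + m) ε := by
  have : span ℂ (ρ.USet h l ε) ≤ (ρ.Je h (l + m) ε).comap (LinearMap.proj m) := by
    rw [span_le]
    rintro x ⟨n, v, hv, rfl | rfl⟩
    · have := I_Je (m + n) hv
      rw [show l - (n : ℂ) + ((m + n : ℤ) : ℂ) = l + m by push_cast; ring] at this
      exact this
    · have h1 := I_Je (m + n) hv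
      have h2 := D_Je (m + n) hv
      rw [show l - (n : ℂ) + ((m + n : ℤ) : ℂ) = l + m by push_cast; ring] at h1 h2
      exact add_mem h2 (smul_mem _ _ h1)
  exact this hx

/-- the lowest level is a quotient of a tensor density module -/
lemma exists_density {ρ : WRep V} (hs : ρ.Smp) (hfin : ∀ μ, FiniteDimensional ℂ (ρ.wt μ))
    (h l ε : ℂ)
    (hQ : ∀ (n m : ℤ), ∀ v ∈ ρ.Je h (l + m) ε, ρ.Q n v = 0) (h0 : ρ.Je h l ε ≠ ⊥) :
    ∃ (e : ℂ) (x : ℤ → V), x ≠ 0 ∧ (∀ m : ℤ, x m ∈ ρ.Je h (l + m) ε) ∧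
      (∀ a m : ℤ, ρ.D a (x m) = (l + m + a * e) • x (m + a)) ∧
      (∀ a m : ℤ, ρ.I a (x m) = h • x (m + a)) := by
  have hU := U_fin hfin h l ε hQ
  -- nonzero
  have hne : span ℂ (ρ.USet h l ε) ≠ ⊥ := by
    intro hbot
    -- all vectors in `Je` are killed by `D` and `I`
    have hz : ∀ (k : ℤ), ∀ v ∈ ρ.Je h (l + k) ε, ∀ n, ρ.D n v = 0 ∧ ρ.I n v = 0 := by
      intro k v hv n
      have hv' : v ∈ ρ.Je h (l - ((-k : ℤ) : ℂ)) ε := by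
        rw [show l - ((-k : ℤ) : ℂ) = l + k by push_cast; ring]; exact hv
      have h1 : ρ.sI' (-k) v = 0 := by
        rw [← mem_bot ℂ, ← hbot]; exact subset_span ⟨-k, v, hv', Or.inl rfl⟩
      have h2 : ρ.sM (-k) v = 0 := by
        rw [← mem_bot ℂ, ← hbot]; exact subset_span ⟨-k, v, hv', Or.inr rfl⟩
      have h3 := congrFun h1 (n + k)
      have h4 := congrFun h2 (n + k)
      simp only [sI', sM, add_neg_cancel_right, Pi.zero_apply] at h3 h4
      rw [h3, smul_zero, add_zero] at h4
      exact ⟨h4, h3⟩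
    have hz0 : ∀ v ∈ ρ.Je h l ε, ∀ n, ρ.D n v = 0 ∧ ρ.I n v = 0 := fun v hv =>
      hz 0 v (by simpa using hv)
    have hQ0 : ∀ n : ℤ, ∀ v ∈ ρ.Je h l ε, ρ.Q n v = 0 := fun n v hv =>
      hQ n 0 v (by simpa using hv)
    have hB : ρ.Base h (ρ.Je h l ε) := by
      refine ⟨fun v hv => (mem_Je.1 hv).1, fun n v hv => ?_, fun n v hv => ?_, hQ0, fun v hv => ?_⟩
      · rw [(hz0 v hv n).1]; exact zero_mem _
      · rw [(hz0 v hv n).2]; exact zero_mem _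
      · rw [(mem_Je.1 hv).2.2]; exact smul_mem _ _ hv
    have hP : ∀ v ∈ ρ.Je h l ε, ∀ n, ρ.P n v = 0 := by
      intro v hv n
      refine hB.lev_one hs h0 _ (P_lev n (i := 0) hv) fun m => ?_
      rw [ρ.QP, hQ0 m v hv, (hz0 v hv _).1, (hz0 v hv _).2]; simp
    have hst : ρ.Stab (ρ.Je h l ε) := ⟨hB.D, hB.I, fun n v hv => by
      rw [hP v hv n]; exact zero_mem _, fun n v hv => by
      rw [hQ0 n v hv]; exact zero_mem _, hB.s⟩
    rcases hs.simple _ hst with h1 | h1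
    · exact h0 h1
    · refine hs.nontriv fun n v => ?_
      have hv : v ∈ ρ.Je h l ε := h1 ▸ mem_top
      exact ⟨(hz0 v hv n).1, (hz0 v hv n).2, hP v hv n, hQ0 n v hv⟩
  have hnt : Nontrivial (span ℂ (ρ.USet h l ε)) := (Submodule.nontrivial_iff_ne_bot).2 hne
  obtain ⟨e, u, hu, hall⟩ := common_eig
    (fun a => (ρ.Eop l a).restrict (U_stab ρ h l ε a).1)
    (fun a => (ρ.Iop a).restrict (U_stab ρ h l ε a).2) h
    (by
      intro u
      apply Subtype.ext
      ext m
      have := (mem_Je.1 (U_mem u.2 m)).2.1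
      simp [Eop_apply, this])
    (by
      intro u
      apply Subtype.ext
      ext m
      have := (mem_Je.1 (U_mem u.2 m)).1
      simp [Iop_apply, this])
    (fun a b u => Subtype.ext (Eop_Eop ρ l a b u))
    (fun a b u => Subtype.ext (Eop_Iop ρ l a b u))
  refine ⟨e, u, fun hc => hu (Subtype.ext hc), U_mem u.2, fun a m => ?_, fun a m => ?_⟩
  · have h1 := congrFun (congrArg Subtype.val (hall a).1) (m + a)
    change ρ.Eop l a u (m + a) = ((a : ℂ) * e) • (u : ℤ → V) (m + a) at h1
    rw [Eop_apply, add_sub_cancel_right, sub_eq_iff_eq_add] at h1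
    rw [h1]; push_cast; module
  · have h1 := congrFun (congrArg Subtype.val (hall a).2) (m + a)
    change ρ.Iop a u (m + a) = h • (u : ℤ → V) (m + a) at h1
    rwa [Iop_apply, add_sub_cancel_right] at h1

/-! ### The final bound -/

lemma eig_zero {T : V →ₗ[ℂ] V} {a b : ℂ} {y : V} (ha : T y = a • y) (hb : T y = b • y)
    (hab : a ≠ b) : y = 0 := by
  rw [ha, ← sub_eq_zero, ← sub_smul] at hb
  exact (smul_eq_zero.1 hb).resolve_left (sub_ne_zero.2 hab)

lemma final_bound {ρ : WRep V} (hs : ρ.Smp) (h l ε : ℂ) (hε : ε = 1 ∨ ε = -1) (e : ℂ)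
    (x : ℤ → V) (hx0 : x ≠ 0) (hxJ : ∀ m : ℤ, x m ∈ ρ.Je h (l + m) ε)
    (hD : ∀ a m : ℤ, ρ.D a (x m) = (l + m + a * e) • x (m + a))
    (hI : ∀ a m : ℤ, ρ.I a (x m) = h • x (m + a))
    (hQ : ∀ n m : ℤ, ρ.Q n (x m) = 0) (μ δ : ℂ) :
    ∃ a b : V, ∀ v, ρ.D 0 v = μ • v → ρ.s v = δ • v → v ∈ span ℂ {a, b} := by
  have hw : ∀ m : ℤ, ρ.D 0 (x m) = (l + m) • x m := fun m => (mem_Je.1 (hxJ m)).2.1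
  have hsx : ∀ m : ℤ, ρ.s (x m) = ε • x m := fun m => (mem_Je.1 (hxJ m)).2.2
  let K : Submodule ℂ V := span ℂ (Set.range x)
  have hxK : ∀ m, x m ∈ K := fun m => subset_span ⟨m, rfl⟩
  have ind : ∀ (T : V →ₗ[ℂ] V) (W : Submodule ℂ V), (∀ m, T (x m) ∈ W) → ∀ v ∈ K, T v ∈ W := by
    intro T W hT
    have : K ≤ W.comap T := by
      rw [span_le]; rintro _ ⟨m, rfl⟩; exact hT m
    exact this
  have hK : ρ.Base h K := by
    refine ⟨?_, fun n => ind _ _ fun m => ?_, fun n => ind _ _ fun m => ?_, fun n v hv => ?_,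
      ind _ _ fun m => ?_⟩
    · have : K ≤ Module.End.eigenspace (ρ.I 0) h := by
        rw [span_le]; rintro _ ⟨m, rfl⟩
        exact Module.End.mem_eigenspace_iff.2 (mem_Je.1 (hxJ m)).1
      exact fun v hv => Module.End.mem_eigenspace_iff.1 (this hv)
    · rw [hD]; exact smul_mem _ _ (hxK _)
    · rw [hI]; exact smul_mem _ _ (hxK _)
    · exact (mem_bot ℂ).1 (ind (ρ.Q n) ⊥ (fun m => (mem_bot ℂ).2 (hQ n m)) v hv)
    · rw [hsx]; exact smul_mem _ _ (hxK _)
  have hK0 : K ≠ ⊥ := by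
    intro hb
    refine hx0 (funext fun m => ?_)
    have := hxK m
    rw [hb] at this
    exact (mem_bot ℂ).1 this
  -- affine dependence
  have aff : ∀ n k : ℤ, ρ.P n (x (k - n)) =
      (1 - (n : ℂ)) • ρ.P 0 (x k) + (n : ℂ) • ρ.P 1 (x (k - 1)) := by
    intro n k
    rw [← sub_eq_zero]
    have hP : ∀ a b, ρ.P a (x b) ∈ ρ.lev K 1 := fun a b => P_lev a (i := 0) (hxK b)
    refine hK.lev_one hs hK0 _ (sub_mem (hP _ _) (add_mem (smul_mem _ _ (hP _ _))
      (smul_mem _ _ (hP _ _)))) fun m => ?_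
    have hq : ∀ a b : ℤ, ρ.Q m (ρ.P a (x (b - a))) =
        (l + b - a + (m + a) * e + m * h) • x (b + m) := by
      intro a b
      rw [ρ.QP, hQ, hD, hI, show b - a + (m + a) = b + m by ring]
      push_cast; simp only [map_zero]; module
    have h0 := hq 0 k
    rw [sub_zero] at h0
    simp only [map_sub, map_add, map_smul]
    rw [hq, h0, hq]
    push_cast; module
  have C1 : ∀ m n k : ℤ, ρ.P m (ρ.P n (x (k - m - n))) =
      ((n : ℂ) - m) • ρ.P 0 (ρ.P 1 (x (k - 1))) := by
    intro m n k
    have f1 : ∀ m n : ℤ, ρ.P m (ρ.P n (x (k - m - n))) =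
        (1 - (n : ℂ)) • ρ.P m (ρ.P 0 (x (k - m))) +
          (n : ℂ) • ρ.P m (ρ.P 1 (x (k - m - 1))) := by
      intro m n; rw [aff, map_add, map_smul, map_smul]
    have z0 : ρ.P 0 (ρ.P 0 (x k)) = 0 := zero_of_eq_neg (ρ.PP 0 0 _)
    have z1 : ρ.P 1 (ρ.P 1 (x (k - 1 - 1))) = 0 := zero_of_eq_neg (ρ.PP 1 1 _)
    have g0 := f1 0 m
    have g1 := f1 1 m
    simp only [sub_zero] at g0
    rw [z0] at g0
    rw [z1, ρ.PP 1 0] at g1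
    rw [f1 m n, ρ.PP m 0, ρ.PP m 1, g0, show k - m - 1 = k - 1 - m by ring, g1]
    module
  have C2 : ∀ m k : ℤ, ρ.P m (ρ.P 0 (ρ.P 1 (x (k - 1)))) = 0 := by
    intro m k
    have h1 := C1 m (m + 1) k
    push_cast at h1
    rw [add_sub_cancel_left, one_smul] at h1
    rw [← h1]
    exact zero_of_eq_neg (ρ.PP m m _)
  let S : Set V := {y | ∃ k : ℤ, y = x k ∨ y = ρ.P 0 (ρ.P 1 (x (k - 1))) ∨ y = ρ.P 0 (x k) ∨
    y = ρ.P 1 (x (k - 1))}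
  have sx : ∀ k, x k ∈ span ℂ S := fun k => subset_span ⟨k, by tauto⟩
  have sC : ∀ k, ρ.P 0 (ρ.P 1 (x (k - 1))) ∈ span ℂ S := fun k => subset_span ⟨k, by tauto⟩
  have sA : ∀ k, ρ.P 0 (x k) ∈ span ℂ S := fun k => subset_span ⟨k, by tauto⟩
  have sB : ∀ k, ρ.P 1 (x (k - 1)) ∈ span ℂ S := fun k => subset_span ⟨k, by tauto⟩
  have sP : ∀ n : ℤ, span ℂ S ≤ (span ℂ S).comap (ρ.P n) := by
    intro n
    rw [span_le]
    rintro y ⟨k, rfl | rfl | rfl | rfl⟩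
    · have := aff n (k + n)
      rw [add_sub_cancel_right] at this
      rw [SetLike.mem_coe, mem_comap, this]
      exact add_mem (smul_mem _ _ (sA _)) (smul_mem _ _ (sB _))
    · rw [SetLike.mem_coe, mem_comap, C2]; exact zero_mem _
    · have := C1 n 0 (k + n)
      rw [sub_zero, add_sub_cancel_right] at this
      rw [SetLike.mem_coe, mem_comap, this]
      exact smul_mem _ _ (sC _)
    · have := C1 n 1 (k + n)
      rw [add_sub_cancel_right] at this
      rw [SetLike.mem_coe, mem_comap, this]
      exact smul_mem _ _ (sC _)
  have hlev : ∀ i, ρ.lev K i ≤ span ℂ S := by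
    intro i
    induction i with
    | zero =>
      refine span_le.2 ?_
      rintro _ ⟨m, rfl⟩
      exact sx m
    | succ i ih => exact lev_succ_le fun n v hv => sP n (ih hv)
  have htop : ∀ v, v ∈ span ℂ S := by
    intro v
    have : (⊤ : Submodule ℂ V) ≤ span ℂ S := by
      rw [← hK.top hs hK0]; exact iSup_le hlev
    exact this mem_top
  -- weights and parities
  have wA : ∀ k : ℤ, ρ.D 0 (ρ.P 0 (x k)) = (l + k) • ρ.P 0 (x k) := by
    intro k
    have := mem_wt.1 (P_wt 0 (mem_wt.2 (hw k)))
    simpa using this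
  have wB : ∀ k : ℤ, ρ.D 0 (ρ.P 1 (x (k - 1))) = (l + k) • ρ.P 1 (x (k - 1)) := by
    intro k
    have := mem_wt.1 (P_wt 1 (mem_wt.2 (hw (k - 1))))
    rw [this]; push_cast; module
  have wC : ∀ k : ℤ, ρ.D 0 (ρ.P 0 (ρ.P 1 (x (k - 1)))) =
      (l + k) • ρ.P 0 (ρ.P 1 (x (k - 1))) := by
    intro k
    have := mem_wt.1 (P_wt 0 (mem_wt.2 (wB k)))
    simpa using this
  have tA : ∀ k : ℤ, ρ.s (ρ.P 0 (x k)) = (-ε) • ρ.P 0 (x k) := by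
    intro k; rw [ρ.sP, hsx, map_smul, neg_smul]
  have tB : ∀ k : ℤ, ρ.s (ρ.P 1 (x (k - 1))) = (-ε) • ρ.P 1 (x (k - 1)) := by
    intro k; rw [ρ.sP, hsx, map_smul, neg_smul]
  have tC : ∀ k : ℤ, ρ.s (ρ.P 0 (ρ.P 1 (x (k - 1)))) = ε • ρ.P 0 (ρ.P 1 (x (k - 1))) := by
    intro k; rw [ρ.sP, tB, map_smul, neg_smul, neg_neg]
  have hred : ∀ v, ρ.D 0 v = μ • v → ρ.s v = δ • v →
      v ∈ span ℂ {y ∈ {y ∈ S | ρ.D 0 y = μ • y} | ρ.s y = δ • y} := by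
    intro v h1 h2
    refine mem_span_eig ρ.s _ ?_ v (mem_span_eig (ρ.D 0) S ?_ v (htop v) μ h1) δ h2
    · rintro y ⟨⟨k, rfl | rfl | rfl | rfl⟩, -⟩
      · exact ⟨_, hsx k⟩
      · exact ⟨_, tC k⟩
      · exact ⟨_, tA k⟩
      · exact ⟨_, tB k⟩
    · rintro y ⟨k, rfl | rfl | rfl | rfl⟩
      · exact ⟨_, hw k⟩
      · exact ⟨_, wC k⟩
      · exact ⟨_, wA k⟩
      · exact ⟨_, wB k⟩
  have hwt : ∀ k : ℤ, ∀ y, ρ.D 0 y = (l + k) • y → ρ.D 0 y = μ • y → y ≠ 0 → μ = l + k := by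
    intro k y h1 h2 h3
    by_contra hne
    exact h3 (eig_zero h2 h1 hne)
  have hεε : -ε ≠ ε := by
    rcases hε with rfl | rfl <;> norm_num
  by_cases hk : ∃ k : ℤ, μ = l + k
  · obtain ⟨k, hk⟩ := hk
    have hkk : ∀ j : ℤ, μ = l + j → j = k := by
      intro j hj
      rw [hk] at hj
      exact_mod_cast (add_left_cancel hj).symm
    by_cases hδ : δ = ε
    · refine ⟨x k, ρ.P 0 (ρ.P 1 (x (k - 1))), fun v h1 h2 => span_le.2 ?_ (hred v h1 h2)⟩
      rintro y ⟨⟨⟨j, hj⟩, hy1⟩, hy2⟩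
      by_cases hy : y = 0
      · rw [hy]; exact zero_mem _
      rcases hj with rfl | rfl | rfl | rfl
      · obtain rfl := hkk j (hwt j _ (hw j) hy1 hy)
        exact subset_span (by simp)
      · obtain rfl := hkk j (hwt j _ (wC j) hy1 hy)
        exact subset_span (by simp)
      · exact absurd (eig_zero (tA j) hy2 (hδ ▸ hεε)) hy
      · exact absurd (eig_zero (tB j) hy2 (hδ ▸ hεε)) hy
    · refine ⟨ρ.P 0 (x k), ρ.P 1 (x (k - 1)), fun v h1 h2 => span_le.2 ?_ (hred v h1 h2)⟩
      rintro y ⟨⟨⟨j, hj⟩, hy1⟩, hy2⟩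
      by_cases hy : y = 0
      · rw [hy]; exact zero_mem _
      rcases hj with rfl | rfl | rfl | rfl
      · exact absurd (eig_zero hy2 (hsx j) hδ) hy
      · exact absurd (eig_zero hy2 (tC j) hδ) hy
      · obtain rfl := hkk j (hwt j _ (wA j) hy1 hy)
        exact subset_span (by simp)
      · obtain rfl := hkk j (hwt j _ (wB j) hy1 hy)
        exact subset_span (by simp)
  · refine ⟨0, 0, fun v h1 h2 => span_le.2 ?_ (hred v h1 h2)⟩
    rintro y ⟨⟨⟨j, hj⟩, hy1⟩, hy2⟩
    by_cases hy : y = 0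
    · rw [hy]; exact zero_mem _
    refine absurd ⟨j, ?_⟩ hk
    rcases hj with rfl | rfl | rfl | rfl
    · exact hwt j _ (hw j) hy1 hy
    · exact hwt j _ (wC j) hy1 hy
    · exact hwt j _ (wA j) hy1 hy
    · exact hwt j _ (wB j) hy1 hy

/-! ### Counting -/

lemma counting (p : ℕ) (Nz : ℤ → ℤ → Prop) (bad : ℤ → Prop)
    (hbad : ∀ k k', bad k → bad k' → k = k')
    (hcol : ∀ k, ∀ F : Finset ℤ, (∀ j ∈ F, Nz j k) → F.card ≤ p)
    (hprop : ∀ j k, ¬ bad k → Nz j k → ∀ n : ℤ, 1 ≤ n → Nz j (k + n) ∨ Nz j (k - n))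
    (hrow : ∀ j : ℤ, j ≤ 0 → ∃ k, Nz j k) : False := by
  classical
  have hrow' : ∀ j : ℤ, ∃ k, j ≤ 0 → Nz j k := by
    intro j
    by_cases hj : j ≤ 0
    · obtain ⟨k, hk⟩ := hrow j hj; exact ⟨k, fun _ => hk⟩
    · exact ⟨0, fun h => absurd h hj⟩
  choose kf hkf using hrow'
  let J : Finset ℤ := Finset.Icc (-(3 * p : ℤ)) 0
  have hJ : J.card = 3 * p + 1 := by simp [J]; omega
  have hJ0 : ∀ j ∈ J, j ≤ 0 := fun j hj => (Finset.mem_Icc.1 hj).2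
  have hB : (J.filter fun j => bad (kf j)).card ≤ p := by
    rcases (J.filter fun j => bad (kf j)).eq_empty_or_nonempty with h0 | ⟨j0, h0⟩
    · rw [h0]; simp
    · rw [Finset.mem_filter] at h0
      refine hcol (kf j0) _ fun j hj => ?_
      rw [Finset.mem_filter] at hj
      rw [hbad _ _ h0.2 hj.2]
      exact hkf j (hJ0 j hj.1)
  let J' := J.filter fun j => ¬ bad (kf j)
  have hJ' : 2 * p + 1 ≤ J'.card := by
    change 2 * p + 1 ≤ (J.filter fun j => ¬ bad (kf j)).card
    have := Finset.card_filter_add_card_filter_not (s := J) (fun j => bad (kf j))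
    omega
  let C : ℕ := J.sup fun j => (kf j).natAbs
  have hC : ∀ j ∈ J, (kf j).natAbs ≤ C := fun j hj => Finset.le_sup (f := fun j => (kf j).natAbs) hj
  let N : ℕ := p * (2 * C + 1) + 1
  have key := Finset.card_mul_le_card_mul (s := J')
    (t := Finset.Icc (-((C + N : ℕ) : ℤ)) ((C + N : ℕ) : ℤ)) Nz (m := N) (n := p)
    (by
      intro j hj
      have hj' := Finset.mem_filter.1 hj
      have hb := hC j hj'.1
      have : (Finset.Icc (1 : ℤ) N).card = N := by simp
      rw [← this]
      refine Finset.card_le_card_of_injOn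
        (fun n => if Nz j (kf j + n) then kf j + n else kf j - n) ?_ ?_
      · intro n hn
        have hn' := Finset.mem_Icc.1 (Finset.mem_coe.1 hn)
        have h1 := hprop j (kf j) hj'.2 (hkf j (hJ0 j hj'.1)) n hn'.1
        rw [Finset.mem_coe, Finset.mem_bipartiteAbove, Finset.mem_Icc]
        dsimp only
        split_ifs with h2
        · exact ⟨by omega, h2⟩
        · exact ⟨by omega, h1.resolve_left h2⟩
      · intro n hn m hm hnm
        have hn' := Finset.mem_Icc.1 (Finset.mem_coe.1 hn)
        have hm' := Finset.mem_Icc.1 (Finset.mem_coe.1 hm)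
        dsimp only at hnm
        split_ifs at hnm <;> omega)
    (by
      intro k hk
      refine hcol k _ fun j hj => ?_
      exact (Finset.mem_bipartiteBelow Nz).1 hj |>.2)
  have hcard : (Finset.Icc (-((C + N : ℕ) : ℤ)) ((C + N : ℕ) : ℤ)).card = 2 * (C + N) + 1 := by
    simp; omega
  rw [hcard] at key
  have h2 : (2 * p + 1) * N ≤ (2 * (C + N) + 1) * p := (Nat.mul_le_mul_right N hJ').trans key
  have h3 : (2 * (C + N) + 1) * p = p * (2 * C + 1) + 2 * p * N := by ring
  have h4 : (2 * p + 1) * N = 2 * p * N + N := by ring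
  have h5 : N = p * (2 * C + 1) + 1 := rfl
  omega

lemma D_Jt {ρ : WRep V} {h μ : ℂ} {v : V} (n : ℤ) (hv : v ∈ ρ.Jt h μ) :
    ρ.D n v ∈ ρ.Jt h (μ + n) := by
  rw [mem_Jt] at *
  refine ⟨?_, mem_wt.1 (D_wt n (mem_wt.2 hv.2))⟩
  have := ρ.DI n 0 v
  rw [hv.1, map_smul] at this
  simpa using this.symm

/-- bounded case -/
lemma bounded_case {ρ : WRep V} (hs : ρ.Smp) (hfin : ∀ μ, FiniteDimensional ℂ (ρ.wt μ))
    (lam : ℂ) (h0 : ρ.wt lam ≠ ⊥) (p : ℕ)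
    (hp : ∀ k : ℤ, Module.finrank ℂ (ρ.wt (lam + k)) ≤ p) (μ δ : ℂ) :
    ∃ a b : V, ∀ v, ρ.D 0 v = μ • v → ρ.s v = δ • v → v ∈ span ℂ {a, b} := by
  classical
  have := hfin
  -- an eigenvector of `I 0`
  obtain ⟨h, v0, hv0, hv0'⟩ : ∃ (h : ℂ) (v : V), v ≠ 0 ∧ v ∈ ρ.Jt h lam := by
    have hI : ∀ v ∈ ρ.wt lam, ρ.I 0 v ∈ ρ.wt lam := fun v hv => by simpa using I_wt 0 hv
    have : Nontrivial (ρ.wt lam) := (Submodule.nontrivial_iff_ne_bot).2 h0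
    obtain ⟨c, hc⟩ := Module.End.exists_eigenvalue ((ρ.I 0).restrict hI)
    obtain ⟨w, hw⟩ := hc.exists_hasEigenvector
    refine ⟨c, w, fun hz => hw.2 (Subtype.ext hz), mem_Jt.2 ⟨?_, mem_wt.1 w.2⟩⟩
    exact congrArg Subtype.val hw.apply_eq_smul
  -- the lowest level
  obtain ⟨j, ⟨k, hjk⟩, hlow⟩ : ∃ j : ℤ, (∃ k : ℤ, ρ.Jt (h + j) (lam + k) ≠ ⊥) ∧
      ∀ k : ℤ, ρ.Jt (h + (j - 1 : ℤ)) (lam + k) = ⊥ := by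
    by_contra hcon
    push Not at hcon
    have hrow : ∀ n : ℕ, ∃ k : ℤ, ρ.Jt (h + (-(n : ℤ) : ℤ)) (lam + k) ≠ ⊥ := by
      intro n
      induction n with
      | zero => exact ⟨0, (Submodule.ne_bot_iff _).2 ⟨v0, by simpa using hv0', hv0⟩⟩
      | succ n ih =>
        obtain ⟨k, hk⟩ := hcon _ ih
        refine ⟨k, ?_⟩
        rwa [show -((n + 1 : ℕ) : ℤ) = -(n : ℤ) - 1 by push_cast; ring]
    refine counting p (fun j k => ρ.Jt (h + j) (lam + k) ≠ ⊥) (fun k => lam + k = 0) ?_ ?_ ?_ ?_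
    · intro k k' h1 h2
      rw [← h2] at h1
      exact_mod_cast add_left_cancel h1
    · intro k F hF
      have hF' : ∀ j : F, ∃ v, v ∈ ρ.Jt (h + (j : ℤ)) (lam + k) ∧ v ≠ 0 := fun j =>
        (Submodule.ne_bot_iff _).1 (hF j j.2)
      choose f hf hf0 using hF'
      have hli : LinearIndependent ℂ f := by
        refine Module.End.eigenvectors_linearIndependent' (ρ.I 0)
          (fun j : F => h + ((j : ℤ) : ℂ)) ?_ f ?_
        · intro a b hab
          exact Subtype.ext (by exact_mod_cast add_left_cancel hab)
        · intro j
          exact Module.End.hasEigenvector_iff.2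
            ⟨Module.End.mem_eigenspace_iff.2 (mem_Jt.1 (hf j)).1, hf0 j⟩
      have hli2 : LinearIndependent ℂ
          (fun j : F => (⟨f j, (hf j).2⟩ : ρ.wt (lam + k))) :=
        LinearIndependent.of_comp (ρ.wt (lam + k)).subtype hli
      have := hli2.fintype_card_le_finrank
      rw [Fintype.card_coe] at this
      exact this.trans (hp k)
    · intro j k hk hn n hn1
      obtain ⟨v, hv, hv0⟩ := (Submodule.ne_bot_iff _).1 hn
      have a1 := D_Jt n hv
      have a2 := D_Jt (-n) hv
      rw [show lam + k + (n : ℂ) = lam + (k + n : ℤ) by push_cast; ring] at a1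
      rw [show lam + k + ((-n : ℤ) : ℂ) = lam + (k - n : ℤ) by push_cast; ring] at a2
      by_contra hc
      push Not at hc
      rw [hc.1, mem_bot] at a1
      rw [hc.2, mem_bot] at a2
      have h1 := ρ.DD (-n) n v
      rw [a1, a2, neg_add_cancel, (mem_Jt.1 hv).2, map_zero, map_zero, zero_add, smul_smul] at h1
      have h2 := (smul_eq_zero.1 h1.symm).resolve_right hv0
      rcases mul_eq_zero.1 h2 with h3 | h3
      · have : n - -n = 0 := by exact_mod_cast h3
        omega
      · exact hk h3
    · intro j hj
      obtain ⟨k, hk⟩ := hrow (-j).toNat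
      refine ⟨k, ?_⟩
      rwa [Int.toNat_of_nonneg (by omega), neg_neg] at hk
  -- a homogeneous component
  obtain ⟨v, hv, hv0⟩ := (Submodule.ne_bot_iff _).1 hjk
  obtain ⟨ε, hε, hJe⟩ : ∃ ε : ℂ, (ε = 1 ∨ ε = -1) ∧ ρ.Je (h + j) (lam + k) ε ≠ ⊥ := by
    have hsv : ρ.s v ∈ ρ.Jt (h + j) (lam + k) := by
      rw [mem_Jt] at *
      rw [← ρ.sI, ← ρ.sD, hv.1, hv.2, map_smul, map_smul]; exact ⟨rfl, rfl⟩
    by_cases hz : v + ρ.s v = 0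
    · refine ⟨-1, Or.inr rfl, (Submodule.ne_bot_iff _).2 ⟨v, ⟨hv, ?_⟩, hv0⟩⟩
      rw [SetLike.mem_coe, Module.End.mem_eigenspace_iff, neg_one_smul]
      exact eq_neg_of_add_eq_zero_right hz
    · refine ⟨1, Or.inl rfl, (Submodule.ne_bot_iff _).2 ⟨_, ⟨add_mem hv hsv, ?_⟩, hz⟩⟩
      rw [SetLike.mem_coe, Module.End.mem_eigenspace_iff, one_smul, map_add, ρ.ss, add_comm]
  have hQ : ∀ (n m : ℤ), ∀ v ∈ ρ.Je (h + j) (lam + k + m) ε, ρ.Q n v = 0 := by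
    intro n m v hv
    have h1 := mem_Je.1 hv
    have h2 : ρ.Q n v ∈ ρ.Jt (h + (j - 1 : ℤ)) (lam + (k + m + n : ℤ)) := by
      refine mem_Jt.2 ⟨?_, ?_⟩
      · rw [ρ.IQ, h1.1, map_smul, zero_add]; push_cast; module
      · rw [mem_wt.1 (Q_wt n (mem_wt.2 h1.2.1))]; push_cast; module
    rw [hlow] at h2
    exact (mem_bot ℂ).1 h2
  obtain ⟨e, x, hx0, hxJ, hD, hI⟩ := exists_density hs hfin (h + j) (lam + k) ε hQ hJe
  exact final_bound hs (h + j) (lam + k) ε hε e x hx0 hxJ hD hI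
    (fun n m => hQ n m _ (hxJ m)) μ δ

/-- no extremal vectors -/
lemma no_sing_case {ρ : WRep V} (hs : ρ.Smp) (hfin : ∀ μ, FiniteDimensional ℂ (ρ.wt μ))
    (hhi : ¬ ∃ (ν : ℂ) (v : V), v ≠ 0 ∧ v ∈ ρ.wt ν ∧ ∀ n : ℤ, 0 < n → ρ.Kil n v)
    (hlo : ¬ ∃ (ν : ℂ) (v : V), v ≠ 0 ∧ v ∈ ρ.wt ν ∧ ∀ n : ℤ, n < 0 → ρ.Kil n v)
    (lam : ℂ) (h0 : ρ.wt lam ≠ ⊥) (μ δ : ℂ) :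
    ∃ a b : V, ∀ v, ρ.D 0 v = μ • v → ρ.s v = δ • v → v ∈ span ℂ {a, b} := by
  have hfl : ∀ μ, FiniteDimensional ℂ (ρ.flip.wt μ) := fun μ => by
    rw [flip_wt]; exact hfin _
  have hno : ¬ ∃ (ν : ℂ) (v : V), v ≠ 0 ∧ v ∈ ρ.flip.wt ν ∧
      ∀ n : ℤ, 0 < n → ρ.flip.Kil n v := by
    rintro ⟨ν, v, h1, h2, h3⟩
    refine hlo ⟨-ν, v, h1, by rwa [flip_wt] at h2, fun n hn => ?_⟩
    have := flip_kil.1 (h3 (-n) (by omega))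
    rwa [neg_neg] at this
  refine bounded_case hs hfin lam h0 (Module.finrank ℂ (ρ.wt lam) +
    (4 * Module.finrank ℂ (ρ.wt lam) + 4 * Module.finrank ℂ (ρ.wt (lam + 1))) +
    (4 * Module.finrank ℂ (ρ.flip.wt (-lam)) + 4 * Module.finrank ℂ (ρ.flip.wt (-lam + 1))))
    (fun k => ?_) μ δ
  obtain ⟨n, rfl | rfl⟩ := k.eq_nat_or_neg
  · rcases Nat.eq_zero_or_pos n with rfl | hn
    · rw [show lam + (((0 : ℕ) : ℤ) : ℂ) = lam by simp]; omega
    · have := finrank_bound hs.flip hfl hno (-lam) n hn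
      rw [flip_wt ρ (-lam - n), show -(-lam - (n : ℂ)) = lam + ((n : ℤ) : ℂ) by push_cast; ring]
        at this
      omega
  · rcases Nat.eq_zero_or_pos n with rfl | hn
    · rw [show lam + ((-((0 : ℕ) : ℤ) : ℤ) : ℂ) = lam by simp]; omega
    · have := finrank_bound hs hfin hhi lam n hn
      rw [show lam - (n : ℂ) = lam + ((-(n : ℤ) : ℤ) : ℂ) by push_cast; ring] at this
      omega

lemma gen {ρ : WRep V} (hs : ρ.Smp) {W : Submodule ℂ V}
    (hD : ∀ (n : ℤ), ∀ v ∈ W, ρ.D n v ∈ W) (hI : ∀ (n : ℤ), ∀ v ∈ W, ρ.I n v ∈ W)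
    (hP : ∀ (n : ℤ), ∀ v ∈ W, ρ.P n v ∈ W) (hQ : ∀ (n : ℤ), ∀ v ∈ W, ρ.Q n v ∈ W)
    {w : V} {ε : ℂ} (hw : w ∈ W) (h0 : w ≠ 0) (hsw : ρ.s w = ε • w) : W = ⊤ := by
  have hst : ρ.Stab (W ⊓ W.comap ρ.s) := by
    refine ⟨?_, ?_, ?_, ?_, ?_⟩
    · rintro n v ⟨h1, h2⟩
      refine ⟨hD n v h1, ?_⟩
      rw [SetLike.mem_coe, mem_comap, ρ.sD]; exact hD n _ h2
    · rintro n v ⟨h1, h2⟩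
      refine ⟨hI n v h1, ?_⟩
      rw [SetLike.mem_coe, mem_comap, ρ.sI]; exact hI n _ h2
    · rintro n v ⟨h1, h2⟩
      refine ⟨hP n v h1, ?_⟩
      rw [SetLike.mem_coe, mem_comap, ρ.sP]; exact neg_mem (hP n _ h2)
    · rintro n v ⟨h1, h2⟩
      refine ⟨hQ n v h1, ?_⟩
      rw [SetLike.mem_coe, mem_comap, ρ.sQ]; exact neg_mem (hQ n _ h2)
    · rintro v ⟨h1, h2⟩
      refine ⟨h2, ?_⟩
      rw [SetLike.mem_coe, mem_comap, ρ.ss]; exact h1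
  have hmem : w ∈ W ⊓ W.comap ρ.s := by
    refine ⟨hw, ?_⟩
    rw [SetLike.mem_coe, mem_comap, hsw]; exact smul_mem _ _ hw
  exact top_le_iff.1 ((hs.top hst hmem h0) ▸ inf_le_left)

end WRep

namespace RamondRep

variable {V : Type} [AddCommGroup V] [Module ℂ V]

/-- the Jacobi identity forces the central charge to vanish -/
lemma c_zero (ρ : RamondRep V) (v : V) (hv : v ≠ 0) : ρ.c₀ = 0 := by
  have h1 := congrArg (ρ.L (-2)) (ρ.rel_GpGm 2 0 v)
  have h2 := ρ.rel_GpGm 2 0 (ρ.L (-2) v)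
  have h3 := ρ.rel_GpGm 0 0 v
  have h4 := ρ.rel_GpGm 2 (-2) v
  have a1 := ρ.rel_LGp (-2) 2 (ρ.Gm 0 v)
  have a2 := congrArg (ρ.Gp 2) (ρ.rel_LGm (-2) 0 v)
  have a3 := ρ.rel_LGm (-2) 0 (ρ.Gp 2 v)
  have a4 := congrArg (ρ.Gm 0) (ρ.rel_LGp (-2) 2 v)
  have b1 := ρ.rel_LL (-2) 2 v
  have b2 := ρ.rel_LH (-2) 2 v
  norm_num [map_add, map_sub, map_smul] at h1 h2 h3 h4 a1 a2 a3 a4 b1 b2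
  have key : (2 * ρ.c₀) • v = 0 := by
    linear_combination (norm := module) h1 - h2 - (3 : ℂ) • h3 - h4 - a1 - a2 - a3 - a4
      - (2 : ℂ) • b1 + (2 : ℂ) • b2
  simpa [hv] using key

/-- the parity involution -/
noncomputable def sg (ρ : RamondRep V) : V →ₗ[ℂ] V :=
  (2 : ℂ) • (ρ.even.subtype ∘ₗ ρ.even.projectionOnto ρ.odd ρ.grading) - LinearMap.id

lemma sg_even {ρ : RamondRep V} {v : V} (hv : v ∈ ρ.even) : ρ.sg v = v := by
  have := Submodule.projectionOnto_apply_left ρ.grading ⟨v, hv⟩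
  simp only [sg, LinearMap.sub_apply, LinearMap.smul_apply, LinearMap.comp_apply,
    LinearMap.id_apply]
  rw [show ρ.even.projectionOnto ρ.odd ρ.grading v = ⟨v, hv⟩ from this, subtype_apply, two_smul]
  abel

lemma sg_odd {ρ : RamondRep V} {v : V} (hv : v ∈ ρ.odd) : ρ.sg v = -v := by
  have := Submodule.projectionOnto_apply_right ρ.grading ⟨v, hv⟩
  simp only [sg, LinearMap.sub_apply, LinearMap.smul_apply, LinearMap.comp_apply,
    LinearMap.id_apply]
  rw [show ρ.even.projectionOnto ρ.odd ρ.grading v = 0 from this]; simp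

lemma dec (ρ : RamondRep V) (v : V) : ∃ a b : V, a ∈ ρ.even ∧ b ∈ ρ.odd ∧ v = a + b := by
  have : v ∈ ρ.even ⊔ ρ.odd := by rw [ρ.grading.sup_eq_top]; exact mem_top
  obtain ⟨a, ha, b, hb, rfl⟩ := mem_sup.1 this
  exact ⟨a, b, ha, hb, rfl⟩

/-- the associated centreless representation -/
noncomputable def toW (ρ : RamondRep V) (hc : ρ.c₀ = 0) : WRep V where
  D m := ρ.L m - ((m : ℂ) / 2) • ρ.H m
  I m := ρ.H m
  P m := (-1 / 2 : ℂ) • ρ.Gp m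
  Q m := ρ.Gm m
  s := ρ.sg
  DD m n v := by
    have a := ρ.rel_LL m n v
    have b := ρ.rel_LH m n v
    have c := ρ.rel_LH n m v
    have d := ρ.rel_HH m n v
    rw [hc, mul_zero, zero_smul] at a d
    rw [add_comm n m] at c
    simp only [LinearMap.sub_apply, LinearMap.smul_apply, map_sub, map_smul]
    push_cast
    linear_combination (norm := module) a - ((n : ℂ) / 2) • b + ((m : ℂ) / 2) • c
      + ((m : ℂ) / 2 * (n / 2)) • d
  DI m n v := by
    have b := ρ.rel_LH m n v
    have d := ρ.rel_HH m n v
    rw [hc, mul_zero, zero_smul] at d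
    simp only [LinearMap.sub_apply, LinearMap.smul_apply, map_sub, map_smul]
    linear_combination (norm := module) b - ((m : ℂ) / 2) • d
  II m n v := by
    have d := ρ.rel_HH m n v
    rw [hc, mul_zero, zero_smul] at d
    exact sub_eq_zero.1 d
  DQ m n v := by
    have b := ρ.rel_LGm m n v
    have d := ρ.rel_HGm m n v
    rw [add_comm n m] at b
    simp only [LinearMap.sub_apply, LinearMap.smul_apply, map_sub, map_smul]
    linear_combination (norm := module) b - ((m : ℂ) / 2) • d
  DP m n v := by
    have b := ρ.rel_LGp m n v
    have d := ρ.rel_HGp m n v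
    rw [add_comm n m] at b
    simp only [LinearMap.sub_apply, LinearMap.smul_apply, map_sub, map_smul]
    linear_combination (norm := module) (-1 / 2 : ℂ) • b + ((m : ℂ) / 4) • d
  IQ m n v := by
    have d := ρ.rel_HGm m n v
    linear_combination (norm := module) d
  IP m n v := by
    have d := ρ.rel_HGp m n v
    simp only [LinearMap.smul_apply, map_smul]
    linear_combination (norm := module) (-1 / 2 : ℂ) • d
  QP m n v := by
    have d := ρ.rel_GpGm n m v
    rw [hc, mul_zero, zero_smul, add_comm n m] at d
    simp only [LinearMap.sub_apply, LinearMap.smul_apply, map_smul]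
    push_cast
    linear_combination (norm := module) (-1 / 2 : ℂ) • d
  QQ m n v := eq_neg_of_add_eq_zero_left (ρ.rel_GmGm m n v)
  PP m n v := by
    have d := ρ.rel_GpGp m n v
    simp only [LinearMap.smul_apply, map_smul]
    linear_combination (norm := module) (1 / 4 : ℂ) • d
  ss v := by
    obtain ⟨a, b, ha, hb, rfl⟩ := ρ.dec v
    rw [map_add, sg_even ha, sg_odd hb, map_add, map_neg, sg_even ha, sg_odd hb, neg_neg]
  sD m v := by
    obtain ⟨a, b, ha, hb, rfl⟩ := ρ.dec v
    simp only [LinearMap.sub_apply, LinearMap.smul_apply, map_add, map_sub, map_smul, map_neg,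
      sg_even ha, sg_odd hb, sg_even (ρ.L_even m a ha), sg_odd (ρ.L_odd m b hb),
      sg_even (ρ.H_even m a ha), sg_odd (ρ.H_odd m b hb)]
    module
  sI m v := by
    obtain ⟨a, b, ha, hb, rfl⟩ := ρ.dec v
    simp only [map_add, map_neg, sg_even ha, sg_odd hb,
      sg_even (ρ.H_even m a ha), sg_odd (ρ.H_odd m b hb)]
  sP m v := by
    obtain ⟨a, b, ha, hb, rfl⟩ := ρ.dec v
    simp only [LinearMap.smul_apply, map_add, map_smul, map_neg,
      sg_even ha, sg_odd hb, sg_odd (ρ.Gp_even m a ha), sg_even (ρ.Gp_odd m b hb)]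
    module
  sQ m v := by
    obtain ⟨a, b, ha, hb, rfl⟩ := ρ.dec v
    simp only [map_add, map_neg,
      sg_even ha, sg_odd hb, sg_odd (ρ.Gm_even m a ha), sg_even (ρ.Gm_odd m b hb)]
    module

lemma toW_wt (ρ : RamondRep V) (hc : ρ.c₀ = 0) (μ : ℂ) : (ρ.toW hc).wt μ = ρ.wt μ := by
  have : (ρ.toW hc).D 0 = ρ.L 0 := by simp [toW]
  rw [WRep.wt, this, wt]

lemma toW_kil {ρ : RamondRep V} {hc : ρ.c₀ = 0} {n : ℤ} {v : V} : (ρ.toW hc).Kil n v ↔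
    ρ.L n v = 0 ∧ ρ.H n v = 0 ∧ ρ.Gp n v = 0 ∧ ρ.Gm n v = 0 := by
  simp only [WRep.Kil, toW, LinearMap.sub_apply, LinearMap.smul_apply]
  constructor
  · rintro ⟨h1, h2, h3, h4⟩
    rw [h2, smul_zero, sub_zero] at h1
    exact ⟨h1, h2, (smul_eq_zero.1 h3).resolve_left (by norm_num), h4⟩
  · rintro ⟨h1, h2, h3, h4⟩
    rw [h1, h2, h3]; simp [h4]

lemma toW_smp {ρ : RamondRep V} (hc : ρ.c₀ = 0) (hs : ρ.IsSimple) : (ρ.toW hc).Smp where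
  nontriv h := hs.1 fun m v => toW_kil.1 (h m v)
  simple W hW := by
    refine hs.2 W ⟨⟨fun m v hv => ?_, hW.I, fun m v hv => ?_, hW.Q⟩, le_antisymm ?_ ?_⟩
    · have h1 := hW.D m v hv
      have h2 := hW.I m v hv
      have : ρ.L m v = (ρ.toW hc).D m v + ((m : ℂ) / 2) • (ρ.toW hc).I m v := by
        simp [toW]
      rw [this]; exact add_mem h1 (smul_mem _ _ h2)
    · have h1 := hW.P m v hv
      have : ρ.Gp m v = (-2 : ℂ) • (ρ.toW hc).P m v := by
        simp only [toW, LinearMap.smul_apply]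
        module
      rw [this]; exact smul_mem _ _ h1
    · intro v hv
      have h1 : ρ.sg v ∈ W := hW.s v hv
      obtain ⟨a, b, ha, hb, rfl⟩ := ρ.dec v
      rw [map_add, sg_even ha, sg_odd hb] at h1
      have ha' : a ∈ W := by
        have : a = (1 / 2 : ℂ) • ((a + b) + (a + -b)) := by module
        rw [this]; exact smul_mem _ _ (add_mem hv h1)
      have hb' : b ∈ W := (Submodule.add_mem_iff_right _ ha').1 hv
      exact add_mem (mem_sup_left ⟨ha', ha⟩) (mem_sup_right ⟨hb', hb⟩)
    · exact sup_le inf_le_left inf_le_left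

lemma toW_gen {ρ : RamondRep V} (hc : ρ.c₀ = 0) (hs : ρ.IsSimple) {w : V} {ε : ℂ} (h0 : w ≠ 0)
    (hsw : (ρ.toW hc).s w = ε • w) : ρ.GeneratedBy w := by
  intro W hW hw
  refine WRep.gen (toW_smp hc hs) (fun n v hv => ?_) hW.2.1 (fun n v hv => ?_) hW.2.2.2 hw h0 hsw
  · exact sub_mem (hW.1 n v hv) (smul_mem _ _ (hW.2.1 n v hv))
  · exact smul_mem _ _ (hW.2.2.1 n v hv)

end RamondRep

/-- a simple weight module with finite-dimensional weight spaces over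
the `N = 2` Ramond algebra is a highest weight module, a lowest weight module, or a
cuspidal module with `dim (V_μ ∩ V_τ) ≤ 2` for every weight `μ` and parity `τ`. -/
theorem stmt0 {V : Type} [AddCommGroup V] [Module ℂ V] (ρ : RamondRep V)
    (hweight : ρ.IsWeight) (hfin : ∀ μ : ℂ, FiniteDimensional ℂ ↥(ρ.wt μ))
    (hsimple : ρ.IsSimple) :
    ρ.IsHighestWeight ∨ ρ.IsLowestWeight ∨
      (ρ.Cuspidal ∧ ∀ (μ : ℂ) (τ : ZMod 2),
        Module.rank ℂ ↥(ρ.wt μ ⊓ ρ.parity τ) ≤ 2) := by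
  classical
  obtain ⟨v0, hv0⟩ : ∃ v : V, v ≠ 0 := by
    by_contra hcon
    push Not at hcon
    exact hsimple.1 fun m v => by rw [hcon v]; simp
  have hc : ρ.c₀ = 0 := ρ.c_zero v0 hv0
  have hs := RamondRep.toW_smp hc hsimple
  have hf : ∀ μ, FiniteDimensional ℂ ((ρ.toW hc).wt μ) := fun μ => by
    rw [RamondRep.toW_wt]; exact hfin μ
  by_cases hhi : ∃ (ν : ℂ) (v : V), v ≠ 0 ∧ v ∈ (ρ.toW hc).wt ν ∧
      ∀ n : ℤ, 0 < n → (ρ.toW hc).Kil n v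
  · left
    obtain ⟨ν, v, hv, hw, hk⟩ := hhi
    obtain ⟨w, a, ε, h1, h2, h3, h4, h5, h6, -⟩ := WRep.refine_vec hf {n | 0 < n}
      ((ρ.toW hc).P 0) (Or.inl rfl) hv hw hk
    rw [RamondRep.toW_wt] at h2
    refine ⟨w, h1, RamondRep.toW_gen hc hsimple h1 h6,
      ⟨ν, a, Module.End.mem_eigenspace_iff.1 h2, h5⟩,
      fun m hm => RamondRep.toW_kil.1 (h3 m hm), ?_⟩
    exact (smul_eq_zero.1 h4).resolve_left (by norm_num)
  by_cases hlo : ∃ (ν : ℂ) (v : V), v ≠ 0 ∧ v ∈ (ρ.toW hc).wt ν ∧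
      ∀ n : ℤ, n < 0 → (ρ.toW hc).Kil n v
  · right; left
    obtain ⟨ν, v, hv, hw, hk⟩ := hlo
    obtain ⟨w, a, ε, h1, h2, h3, h4, h5, h6, -⟩ := WRep.refine_vec hf {n | n < 0}
      ((ρ.toW hc).Q 0) (Or.inr rfl) hv hw hk
    rw [RamondRep.toW_wt] at h2
    exact ⟨w, h1, RamondRep.toW_gen hc hsimple h1 h6,
      ⟨ν, a, Module.End.mem_eigenspace_iff.1 h2, h5⟩,
      fun m hm => RamondRep.toW_kil.1 (h3 m hm), h4⟩
  right; right
  obtain ⟨lam, hlam⟩ : ∃ lam, (ρ.toW hc).wt lam ≠ ⊥ := by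
    by_contra hcon
    push Not at hcon
    have htop : (⨆ μ : ℂ, ρ.wt μ) = ⊤ := hweight
    have hbot : (⨆ μ : ℂ, ρ.wt μ) = ⊥ := by
      rw [iSup_eq_bot]
      intro μ
      rw [← RamondRep.toW_wt ρ hc]; exact hcon μ
    rw [hbot] at htop
    exact hv0 ((mem_bot ℂ).1 (htop ▸ mem_top))
  have hrank : ∀ (μ : ℂ) (τ : ZMod 2), Module.rank ℂ ↥(ρ.wt μ ⊓ ρ.parity τ) ≤ 2 := by
    intro μ τ
    obtain ⟨δ, hδ⟩ : ∃ δ : ℂ, ∀ v ∈ ρ.parity τ, ρ.sg v = δ • v := by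
      by_cases hτ : τ = 0
      · refine ⟨1, fun v hv => ?_⟩
        rw [RamondRep.parity, if_pos hτ] at hv
        rw [RamondRep.sg_even hv, one_smul]
      · refine ⟨-1, fun v hv => ?_⟩
        rw [RamondRep.parity, if_neg hτ] at hv
        rw [RamondRep.sg_odd hv, neg_one_smul]
    obtain ⟨a, b, hab⟩ := WRep.no_sing_case hs hf hhi hlo lam hlam μ δ
    have hle : ρ.wt μ ⊓ ρ.parity τ ≤ span ℂ {a, b} := by
      rintro v ⟨h1, h2⟩
      have h1' : v ∈ (ρ.toW hc).wt μ := by rw [RamondRep.toW_wt]; exact h1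
      exact hab v (WRep.mem_wt.1 h1') (hδ v h2)
    refine (Submodule.rank_mono hle).trans ((rank_span_le _).trans ?_)
    refine (Cardinal.mk_insert_le).trans ?_
    rw [Cardinal.mk_singleton]
    norm_num
  exact ⟨⟨hweight, 2, fun μ τ => by exact_mod_cast hrank μ τ⟩, hrank⟩
end

section
/- Let V be a simple weight module with finite-dimensional weight spaces over the N=2 Ramond algebra 𝔤. If V is neither a highest weight module nor a lowest weight module, then V is cuspidal. -/
open Submodule

namespace RamondRep

variable {V : Type} [AddCommGroup V] [Module ℂ V]

/-- All degree `m` operators annihilate `v`. -/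
def Kill (ρ : RamondRep V) (m : ℤ) (v : V) : Prop :=
  ρ.L m v = 0 ∧ ρ.H m v = 0 ∧ ρ.Gp m v = 0 ∧ ρ.Gm m v = 0

/-- Homogeneous vectors. -/
def Hom (ρ : RamondRep V) (v : V) : Prop := v ∈ ρ.even ∨ v ∈ ρ.odd

theorem mem_wt (ρ : RamondRep V) (μ : ℂ) (v : V) : v ∈ ρ.wt μ ↔ ρ.L 0 v = μ • v := by
  simp [wt, Module.End.mem_eigenspace_iff]

theorem L_wt (ρ : RamondRep V) {μ : ℂ} {v : V} (m : ℤ) (h : v ∈ ρ.wt μ) :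
    ρ.L m v ∈ ρ.wt (μ + m) := by
  rw [mem_wt] at *
  have := ρ.rel_LL 0 m v
  rw [h, map_smul, sub_eq_iff_eq_add] at this
  rw [this]
  by_cases hm : m = 0
  · subst hm; simp
  · simp [hm]; module

theorem H_wt (ρ : RamondRep V) {μ : ℂ} {v : V} (m : ℤ) (h : v ∈ ρ.wt μ) :
    ρ.H m v ∈ ρ.wt (μ + m) := by
  rw [mem_wt] at *
  have := ρ.rel_LH 0 m v
  rw [h, map_smul, sub_eq_iff_eq_add] at this
  rw [this]
  simp; module

theorem Gp_wt (ρ : RamondRep V) {μ : ℂ} {v : V} (m : ℤ) (h : v ∈ ρ.wt μ) :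
    ρ.Gp m v ∈ ρ.wt (μ + m) := by
  rw [mem_wt] at *
  have := ρ.rel_LGp 0 m v
  rw [h, map_smul, sub_eq_iff_eq_add] at this
  rw [this]
  simp; module

theorem Gm_wt (ρ : RamondRep V) {μ : ℂ} {v : V} (m : ℤ) (h : v ∈ ρ.wt μ) :
    ρ.Gm m v ∈ ρ.wt (μ + m) := by
  rw [mem_wt] at *
  have := ρ.rel_LGm 0 m v
  rw [h, map_smul, sub_eq_iff_eq_add] at this
  rw [this]
  simp; module

theorem L_hom (ρ : RamondRep V) {v : V} (m : ℤ) (h : ρ.Hom v) : ρ.Hom (ρ.L m v) :=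
  h.imp (ρ.L_even m v) (ρ.L_odd m v)

theorem H_hom (ρ : RamondRep V) {v : V} (m : ℤ) (h : ρ.Hom v) : ρ.Hom (ρ.H m v) :=
  h.imp (ρ.H_even m v) (ρ.H_odd m v)

theorem Gp_hom (ρ : RamondRep V) {v : V} (m : ℤ) (h : ρ.Hom v) : ρ.Hom (ρ.Gp m v) :=
  h.symm.imp (ρ.Gp_odd m v) (ρ.Gp_even m v)

theorem Gm_hom (ρ : RamondRep V) {v : V} (m : ℤ) (h : ρ.Hom v) : ρ.Hom (ρ.Gm m v) :=
  h.symm.imp (ρ.Gm_odd m v) (ρ.Gm_even m v)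

/-- Every vector splits as even plus odd. -/
theorem split (ρ : RamondRep V) (v : V) : ∃ e ∈ ρ.even, ∃ o ∈ ρ.odd, e + o = v := by
  have : v ∈ ρ.even ⊔ ρ.odd := by rw [ρ.grading.sup_eq_top]; trivial
  exact Submodule.mem_sup.1 this

theorem eq_zero_of_add (ρ : RamondRep V) {e o : V} (he : e ∈ ρ.even) (ho : o ∈ ρ.odd)
    (h : e + o = 0) : e = 0 ∧ o = 0 := by
  have h1 : e = -o := eq_neg_of_add_eq_zero_left h
  have h2 : e = 0 := Submodule.disjoint_def.1 ρ.grading.disjoint e he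
    (by rw [h1]; exact neg_mem ho)
  exact ⟨h2, by simpa [h2] using h⟩

theorem kill_split (ρ : RamondRep V) {e o : V} (he : e ∈ ρ.even) (ho : o ∈ ρ.odd) {m : ℤ}
    (h : ρ.Kill m (e + o)) : ρ.Kill m e ∧ ρ.Kill m o := by
  obtain ⟨h1, h2, h3, h4⟩ := h
  rw [map_add] at h1 h2 h3 h4
  have a1 := ρ.eq_zero_of_add (ρ.L_even m e he) (ρ.L_odd m o ho) h1
  have a2 := ρ.eq_zero_of_add (ρ.H_even m e he) (ρ.H_odd m o ho) h2
  rw [add_comm] at h3 h4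
  have a3 := ρ.eq_zero_of_add (ρ.Gp_odd m o ho) (ρ.Gp_even m e he) h3
  have a4 := ρ.eq_zero_of_add (ρ.Gm_odd m o ho) (ρ.Gm_even m e he) h4
  exact ⟨⟨a1.1, a2.1, a3.2, a4.2⟩, ⟨a1.2, a2.2, a3.1, a4.1⟩⟩

theorem wt_split (ρ : RamondRep V) {e o : V} (he : e ∈ ρ.even) (ho : o ∈ ρ.odd) {μ : ℂ}
    (h : e + o ∈ ρ.wt μ) : e ∈ ρ.wt μ ∧ o ∈ ρ.wt μ := by
  rw [mem_wt] at *
  rw [mem_wt]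
  have h' : (ρ.L 0 e - μ • e) + (ρ.L 0 o - μ • o) = 0 := by
    rw [map_add, smul_add] at h
    rw [sub_add_sub_comm, h, sub_self]
  have := ρ.eq_zero_of_add (sub_mem (ρ.L_even 0 e he) (ρ.even.smul_mem μ he))
    (sub_mem (ρ.L_odd 0 o ho) (ρ.odd.smul_mem μ ho)) h'
  exact ⟨sub_eq_zero.1 this.1, sub_eq_zero.1 this.2⟩

theorem kill_L (ρ : RamondRep V) {m n : ℤ} {v : V} (h : ρ.Kill m v) (h' : ρ.Kill (m + n) v)
    (hmn : m + n ≠ 0) : ρ.Kill m (ρ.L n v) := by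
  obtain ⟨h1, h2, h3, h4⟩ := h
  obtain ⟨k1, k2, k3, k4⟩ := h'
  have e := add_comm n m
  refine ⟨?_, ?_, ?_, ?_⟩
  · simpa [h1, k1, hmn] using ρ.rel_LL m n v
  · simpa [h2, k2, hmn, e] using ρ.rel_LH n m v
  · simpa [h3, k3, hmn, e] using ρ.rel_LGp n m v
  · simpa [h4, k4, hmn, e] using ρ.rel_LGm n m v

theorem kill_H (ρ : RamondRep V) {m n : ℤ} {v : V} (h : ρ.Kill m v) (h' : ρ.Kill (m + n) v)
    (hmn : m + n ≠ 0) : ρ.Kill m (ρ.H n v) := by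
  obtain ⟨h1, h2, h3, h4⟩ := h
  obtain ⟨k1, k2, k3, k4⟩ := h'
  have e := add_comm n m
  refine ⟨?_, ?_, ?_, ?_⟩
  · simpa [h1, k2, hmn] using ρ.rel_LH m n v
  · simpa [h2, k2, hmn, e] using ρ.rel_HH m n v
  · simpa [h3, k3, hmn, e] using ρ.rel_HGp n m v
  · simpa [h4, k4, hmn, e] using ρ.rel_HGm n m v

theorem kill_Gp (ρ : RamondRep V) {m n : ℤ} {v : V} (h : ρ.Kill m v) (h' : ρ.Kill (m + n) v)
    (hmn : m + n ≠ 0) : ρ.Kill m (ρ.Gp n v) := by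
  obtain ⟨h1, h2, h3, h4⟩ := h
  obtain ⟨k1, k2, k3, k4⟩ := h'
  have e := add_comm n m
  refine ⟨?_, ?_, ?_, ?_⟩
  · simpa [h1, k3, hmn, e] using ρ.rel_LGp m n v
  · simpa [h2, k3, hmn, e] using ρ.rel_HGp m n v
  · simpa [h3, k3, hmn, e] using ρ.rel_GpGp m n v
  · simpa [h4, k1, k2, hmn, e] using ρ.rel_GpGm n m v

theorem kill_Gm (ρ : RamondRep V) {m n : ℤ} {v : V} (h : ρ.Kill m v) (h' : ρ.Kill (m + n) v)
    (hmn : m + n ≠ 0) : ρ.Kill m (ρ.Gm n v) := by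
  obtain ⟨h1, h2, h3, h4⟩ := h
  obtain ⟨k1, k2, k3, k4⟩ := h'
  have e := add_comm n m
  refine ⟨?_, ?_, ?_, ?_⟩
  · simpa [h1, k4, hmn, e] using ρ.rel_LGm m n v
  · simpa [h2, k4, hmn, e] using ρ.rel_HGm m n v
  · simpa [h3, k1, k2, hmn, e] using ρ.rel_GpGm m n v
  · simpa [h4, k4, hmn, e] using ρ.rel_GmGm m n v

/-- Annihilation degrees are closed under sums of distinct positive degrees. -/
theorem kill_add (ρ : RamondRep V) {m n : ℤ} {v : V} (hm : 0 < m) (hn : 0 < n) (hne : m ≠ n)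
    (h : ρ.Kill m v) (h' : ρ.Kill n v) : ρ.Kill (m + n) v := by
  obtain ⟨h1, h2, h3, h4⟩ := h
  obtain ⟨k1, k2, k3, k4⟩ := h'
  have h0 : m + n ≠ 0 := by omega
  have hn0 : n ≠ 0 := by omega
  have hc : (n : ℂ) - m ≠ 0 := by
    rw [sub_ne_zero]; exact_mod_cast hne.symm
  refine ⟨?_, ?_, ?_, ?_⟩
  · have := ρ.rel_LL m n v
    simp only [h1, k1, h0, map_zero, sub_self, if_false, mul_zero, zero_mul, zero_smul, add_zero]
      at this
    exact (smul_eq_zero.1 this.symm).resolve_left hc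
  · have := ρ.rel_LH m n v
    simpa [h1, k2, hn0] using this.symm
  · have := ρ.rel_HGp m n v
    simpa [h2, k3] using this.symm
  · have := ρ.rel_HGm m n v
    simpa [h2, k4] using this.symm

theorem kill_comb (ρ : RamondRep V) {k : ℕ} (hk : 1 ≤ k) {v : V}
    (h : ρ.Kill k v) (h' : ρ.Kill (k + 1) v) (a b : ℕ) :
    ρ.Kill (((a + 1) * k + (b + 1) * (k + 1) : ℕ) : ℤ) v := by
  have base : ρ.Kill (((0 + 1) * k + (0 + 1) * (k + 1) : ℕ) : ℤ) v := by
    have := ρ.kill_add (m := k) (n := k + 1) (by omega) (by omega) (by omega) h h'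
    convert this using 1
    push_cast; ring
  have hb : ∀ b : ℕ, ρ.Kill (((0 + 1) * k + (b + 1) * (k + 1) : ℕ) : ℤ) v := by
    intro b
    induction b with
    | zero => exact base
    | succ b ih =>
      have := ρ.kill_add (m := k + 1) (n := (((0 + 1) * k + (b + 1) * (k + 1) : ℕ) : ℤ))
        (by omega) (by positivity) (by push_cast; nlinarith) h' ih
      convert this using 1
      push_cast; ring
  induction a with
  | zero => exact hb b
  | succ a ih =>
    have := ρ.kill_add (m := k) (n := (((a + 1) * k + (b + 1) * (k + 1) : ℕ) : ℤ))
      (by omega) (by positivity) (by push_cast; nlinarith) h ih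
    convert this using 1
    push_cast; ring

theorem kill_large (ρ : RamondRep V) {k : ℕ} (hk : 1 ≤ k) {v : V}
    (h : ρ.Kill k v) (h' : ρ.Kill (k + 1) v) : ∃ N : ℤ, ∀ m : ℤ, N ≤ m → ρ.Kill m v := by
  refine ⟨k * (3 * k + 3), fun m hm => ?_⟩
  obtain ⟨n, rfl⟩ : ∃ n : ℕ, m = n := ⟨m.toNat, by
    rw [Int.toNat_of_nonneg]; exact le_trans (by positivity) hm⟩
  have hn : k * (3 * k + 3) ≤ n := by exact_mod_cast hm
  have hq : 3 * k + 3 ≤ n / k := by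
    rw [Nat.le_div_iff_mul_le (by omega)]; linarith [mul_comm k (3*k+3)]
  have hr : n % k < k := Nat.mod_lt _ (by omega)
  have hdiv := Nat.div_add_mod n k
  generalize n / k = q at *
  generalize n % k = r at *
  obtain ⟨a, rfl⟩ : ∃ a, q = a + r + k + 2 := ⟨q - r - k - 2, by omega⟩
  obtain ⟨b, hb⟩ : ∃ b, r + k = b + 1 := ⟨r + k - 1, by omega⟩
  have := ρ.kill_comb hk h h' a b
  convert this using 2
  rw [← hb, ← hdiv]; ring

/-- A homogeneous nonzero vector generates a simple module. -/
theorem generated (ρ : RamondRep V) (hs : ρ.IsSimple) {w : V} (hw : w ≠ 0) (hh : ρ.Hom w) :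
    ρ.GeneratedBy w := by
  intro W ⟨hL, hH, hP, hM⟩ hwW
  have hle : (W ⊓ ρ.even) ⊔ (W ⊓ ρ.odd) ≤ W := sup_le inf_le_left inf_le_left
  have key : ∀ (f : V →ₗ[ℂ] V), (∀ v ∈ W ⊓ ρ.even, f v ∈ (W ⊓ ρ.even) ⊔ (W ⊓ ρ.odd)) →
      (∀ v ∈ W ⊓ ρ.odd, f v ∈ (W ⊓ ρ.even) ⊔ (W ⊓ ρ.odd)) →
      ∀ v ∈ (W ⊓ ρ.even) ⊔ (W ⊓ ρ.odd), f v ∈ (W ⊓ ρ.even) ⊔ (W ⊓ ρ.odd) := by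
    intro f h1 h2 v hv
    obtain ⟨e, he, o, ho, rfl⟩ := Submodule.mem_sup.1 hv
    rw [map_add]
    exact add_mem (h1 e he) (h2 o ho)
  have hgr : ρ.IsGradedSubmod ((W ⊓ ρ.even) ⊔ (W ⊓ ρ.odd)) := by
    refine ⟨⟨fun m => key _ ?_ ?_, fun m => key _ ?_ ?_, fun m => key _ ?_ ?_,
      fun m => key _ ?_ ?_⟩, ?_⟩
    · exact fun v hv => Submodule.mem_sup_left ⟨hL m v hv.1, ρ.L_even m v hv.2⟩
    · exact fun v hv => Submodule.mem_sup_right ⟨hL m v hv.1, ρ.L_odd m v hv.2⟩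
    · exact fun v hv => Submodule.mem_sup_left ⟨hH m v hv.1, ρ.H_even m v hv.2⟩
    · exact fun v hv => Submodule.mem_sup_right ⟨hH m v hv.1, ρ.H_odd m v hv.2⟩
    · exact fun v hv => Submodule.mem_sup_right ⟨hP m v hv.1, ρ.Gp_even m v hv.2⟩
    · exact fun v hv => Submodule.mem_sup_left ⟨hP m v hv.1, ρ.Gp_odd m v hv.2⟩
    · exact fun v hv => Submodule.mem_sup_right ⟨hM m v hv.1, ρ.Gm_even m v hv.2⟩
    · exact fun v hv => Submodule.mem_sup_left ⟨hM m v hv.1, ρ.Gm_odd m v hv.2⟩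
    · apply le_antisymm
      · exact sup_le_sup (le_inf le_sup_left inf_le_right) (le_inf le_sup_right inf_le_right)
      · exact sup_le inf_le_left inf_le_left
  rcases hs.2 _ hgr with h | h
  · exfalso
    apply hw
    have : w ∈ (W ⊓ ρ.even) ⊔ (W ⊓ ρ.odd) := by
      rcases hh with hh | hh
      · exact Submodule.mem_sup_left ⟨hwW, hh⟩
      · exact Submodule.mem_sup_right ⟨hwW, hh⟩
    rw [h] at this
    simpa using this
  · rw [h] at hle
    exact top_le_iff.1 hle

theorem kill_zero (ρ : RamondRep V) (m : ℤ) : ρ.Kill m 0 := by simp [Kill]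

theorem kill_vadd (ρ : RamondRep V) {m : ℤ} {v w : V} (h : ρ.Kill m v) (h' : ρ.Kill m w) :
    ρ.Kill m (v + w) := by
  obtain ⟨h1, h2, h3, h4⟩ := h
  obtain ⟨k1, k2, k3, k4⟩ := h'
  simp [Kill, *]

theorem kill_smul (ρ : RamondRep V) {m : ℤ} {v : V} (c : ℂ) (h : ρ.Kill m v) :
    ρ.Kill m (c • v) := by
  obtain ⟨h1, h2, h3, h4⟩ := h
  simp [Kill, *]

/-- A singular homogeneous weight vector gives a highest weight module. -/
theorem highest_of_singular (ρ : RamondRep V) (hfin : ∀ μ : ℂ, FiniteDimensional ℂ ↥(ρ.wt μ))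
    (hs : ρ.IsSimple) {ν : ℂ} {w : V} (hw : w ≠ 0) (hwt : w ∈ ρ.wt ν) (hh : ρ.Hom w)
    (hk : ∀ m : ℤ, 0 < m → ρ.Kill m w) : ρ.IsHighestWeight := by
  -- arrange `Gp 0 w = 0`
  obtain ⟨w, hw, hwt, hh, hk, hg⟩ : ∃ w : V, w ≠ 0 ∧ w ∈ ρ.wt ν ∧ ρ.Hom w ∧
      (∀ m : ℤ, 0 < m → ρ.Kill m w) ∧ ρ.Gp 0 w = 0 := by
    by_cases hg : ρ.Gp 0 w = 0
    · exact ⟨w, hw, hwt, hh, hk, hg⟩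
    · refine ⟨ρ.Gp 0 w, hg, by simpa using ρ.Gp_wt 0 hwt, ρ.Gp_hom 0 hh, fun m hm => ?_, ?_⟩
      · exact ρ.kill_Gp (hk m hm) (by simpa using hk m hm) (by omega)
      · have := ρ.rel_GpGp 0 0 w
        rw [← two_smul ℂ, smul_eq_zero] at this
        simpa using this
  obtain ⟨Q, hQ, hwQ, hQH⟩ : ∃ Q : Submodule ℂ V, (∀ v ∈ Q, ρ.Hom v) ∧ w ∈ Q ∧
      ∀ v ∈ Q, ρ.H 0 v ∈ Q := by
    rcases hh with h | h
    · exact ⟨ρ.even, fun v hv => Or.inl hv, h, ρ.H_even 0⟩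
    · exact ⟨ρ.odd, fun v hv => Or.inr hv, h, ρ.H_odd 0⟩
  let S : Submodule ℂ V :=
    { carrier := {v | v ∈ ρ.wt ν ∧ v ∈ Q ∧ (∀ m : ℤ, 0 < m → ρ.Kill m v) ∧ ρ.Gp 0 v = 0}
      add_mem' := fun {a b} ha hb => ⟨add_mem ha.1 hb.1, add_mem ha.2.1 hb.2.1,
        fun m hm => ρ.kill_vadd (ha.2.2.1 m hm) (hb.2.2.1 m hm), by
          rw [map_add, ha.2.2.2, hb.2.2.2, add_zero]⟩
      zero_mem' := ⟨zero_mem _, zero_mem _, fun m _ => ρ.kill_zero m, map_zero _⟩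
      smul_mem' := fun c a ha => ⟨Submodule.smul_mem _ c ha.1, Submodule.smul_mem _ c ha.2.1,
        fun m hm => ρ.kill_smul c (ha.2.2.1 m hm), by
          rw [map_smul, ha.2.2.2, smul_zero]⟩ }
  have hSle : S ≤ ρ.wt ν := fun v hv => hv.1
  have hwS : w ∈ S := ⟨hwt, hwQ, hk, hg⟩
  have hSH : ∀ v ∈ S, ρ.H 0 v ∈ S := by
    rintro v ⟨h1, h2, h3, h4⟩
    refine ⟨by simpa using ρ.H_wt 0 h1, hQH v h2, fun m hm => ?_, ?_⟩
    · exact ρ.kill_H (h3 m hm) (by simpa using h3 m hm) (by omega)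
    · simpa [h4] using ρ.rel_HGp 0 0 v
  haveI := hfin ν
  haveI : FiniteDimensional ℂ S := Submodule.finiteDimensional_of_le hSle
  haveI : Nontrivial S := ⟨⟨⟨w, hwS⟩, 0, fun h => hw (by simpa using congrArg Subtype.val h)⟩⟩
  obtain ⟨c, hc⟩ := Module.End.exists_eigenvalue ((ρ.H 0).restrict hSH)
  obtain ⟨x, hx⟩ := hc.exists_hasEigenvector
  have hx1 := congrArg Subtype.val hx.apply_eq_smul
  have hx0 : (x : V) ≠ 0 := fun h => hx.2 (Subtype.ext h)
  obtain ⟨h1, h2, h3, h4⟩ := x.2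
  exact ⟨x, hx0, ρ.generated hs hx0 (hQ _ h2), ⟨ν, c, (ρ.mem_wt _ _).1 h1, by simpa using hx1⟩,
    h3, h4⟩

/-- Vectors annihilated by all operators of sufficiently high degree. -/
def tail (ρ : RamondRep V) : Submodule ℂ V where
  carrier := {v | ∃ N : ℤ, ∀ m : ℤ, N ≤ m → ρ.Kill m v}
  add_mem' := by
    rintro a b ⟨N, hN⟩ ⟨M, hM⟩
    exact ⟨max N M, fun m hm => ρ.kill_vadd (hN m (by omega)) (hM m (by omega))⟩
  zero_mem' := ⟨0, fun m _ => ρ.kill_zero m⟩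
  smul_mem' := by
    rintro c a ⟨N, hN⟩
    exact ⟨N, fun m hm => ρ.kill_smul c (hN m hm)⟩

theorem tail_graded (ρ : RamondRep V) : ρ.IsGradedSubmod ρ.tail := by
  refine ⟨⟨?_, ?_, ?_, ?_⟩, ?_⟩
  · rintro n v ⟨N, hN⟩
    exact ⟨max N (max (N - n) (1 - n)), fun m hm =>
      ρ.kill_L (hN m (by omega)) (hN _ (by omega)) (by omega)⟩
  · rintro n v ⟨N, hN⟩
    exact ⟨max N (max (N - n) (1 - n)), fun m hm =>
      ρ.kill_H (hN m (by omega)) (hN _ (by omega)) (by omega)⟩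
  · rintro n v ⟨N, hN⟩
    exact ⟨max N (max (N - n) (1 - n)), fun m hm =>
      ρ.kill_Gp (hN m (by omega)) (hN _ (by omega)) (by omega)⟩
  · rintro n v ⟨N, hN⟩
    exact ⟨max N (max (N - n) (1 - n)), fun m hm =>
      ρ.kill_Gm (hN m (by omega)) (hN _ (by omega)) (by omega)⟩
  · apply le_antisymm
    · rintro v ⟨N, hN⟩
      obtain ⟨e, he, o, ho, rfl⟩ := ρ.split v
      exact Submodule.add_mem_sup
        ⟨⟨N, fun m hm => (ρ.kill_split he ho (hN m hm)).1⟩, he⟩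
        ⟨⟨N, fun m hm => (ρ.kill_split he ho (hN m hm)).2⟩, ho⟩
    · exact sup_le inf_le_left inf_le_left

theorem exists_hom (ρ : RamondRep V) (hweight : ρ.IsWeight) (hs : ρ.IsSimple) :
    ∃ (μ : ℂ) (w : V), w ≠ 0 ∧ w ∈ ρ.wt μ ∧ ρ.Hom w := by
  by_contra hcon
  push Not at hcon
  have hz : ∀ μ, ρ.wt μ = ⊥ := by
    intro μ
    rw [eq_bot_iff]
    intro v hv
    obtain ⟨e, he, o, ho, rfl⟩ := ρ.split v
    have h := ρ.wt_split he ho hv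
    have h1 : e = 0 := by
      by_contra h0; exact hcon μ e h0 h.1 (Or.inl he)
    have h2 : o = 0 := by
      by_contra h0; exact hcon μ o h0 h.2 (Or.inr ho)
    simp [h1, h2]
  have : (⊤ : Submodule ℂ V) = ⊥ := by
    rw [← show _ = _ from hweight]; simp [hz]
  apply hs.1
  have hv : ∀ v : V, v = 0 := fun v => by
    have : v ∈ (⊥ : Submodule ℂ V) := by rw [← this]; trivial
    simpa using this
  exact fun m v => ⟨hv _, hv _, hv _, hv _⟩

/-- A nonzero vector annihilated in high degrees forces a highest weight module. -/
theorem highest_of_tail (ρ : RamondRep V) (hweight : ρ.IsWeight)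
    (hfin : ∀ μ : ℂ, FiniteDimensional ℂ ↥(ρ.wt μ)) (hs : ρ.IsSimple)
    {v : V} (hv : v ≠ 0) (hN : ∃ N : ℤ, ∀ m : ℤ, N ≤ m → ρ.Kill m v) : ρ.IsHighestWeight := by
  have htop : ρ.tail = ⊤ := by
    refine (hs.2 _ ρ.tail_graded).resolve_left fun h => hv ?_
    have : v ∈ ρ.tail := hN
    rw [h] at this
    simpa using this
  obtain ⟨μ, u, hu, huwt, huh⟩ := ρ.exists_hom hweight hs
  obtain ⟨N, hN1, hN⟩ : ∃ N : ℤ, 1 ≤ N ∧ ∀ x ∈ ρ.wt μ, ∀ m : ℤ, N ≤ m → ρ.Kill m x := by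
    have hall : ∀ x : V, ∃ N : ℤ, ∀ m : ℤ, N ≤ m → ρ.Kill m x := fun x => by
      have : x ∈ ρ.tail := by rw [htop]; trivial
      exact this
    choose f hf using hall
    obtain ⟨S, hS⟩ := (Submodule.fg_iff_finiteDimensional (ρ.wt μ)).2 (hfin μ)
    obtain ⟨B, hB⟩ := (S.image f).bddAbove
    refine ⟨max 1 B, by omega, fun x hx m hm => ?_⟩
    rw [← hS] at hx
    induction hx using Submodule.span_induction with
    | mem y hy =>
      refine hf y m ?_
      have := hB (Finset.mem_coe.2 (Finset.mem_image_of_mem f hy))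
      omega
    | zero => exact ρ.kill_zero m
    | add a b _ _ ha hb => exact ρ.kill_vadd ha hb
    | smul c a _ ha => exact ρ.kill_smul c ha
  let P : ℕ → Prop := fun k => ∃ w : V, w ≠ 0 ∧ w ∈ ρ.wt (μ + (k : ℤ)) ∧ ρ.Hom w ∧
    ∀ m : ℤ, N ≤ m → ρ.Kill m w
  have hP0 : P 0 := ⟨u, hu, by simpa using huwt, huh, hN u huwt⟩
  by_cases hb : ∃ B, ∀ k, P k → k ≤ B
  · obtain ⟨B, hB⟩ := hb
    classical
    have hk := Nat.findGreatest_spec (P := P) (Nat.zero_le B) hP0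
    have hmax : ∀ j, P j → j ≤ Nat.findGreatest P B := fun j hj =>
      Nat.le_findGreatest (hB j hj) hj
    generalize Nat.findGreatest P B = k at hk hmax
    obtain ⟨w, hw, hwt, hh, hkill⟩ := hk
    refine ρ.highest_of_singular hfin hs hw hwt hh fun m hm => ?_
    have key : ∀ x : V, x ∈ ρ.wt (μ + (k : ℤ) + m) → ρ.Hom x →
        (∀ m : ℤ, N ≤ m → ρ.Kill m x) → x = 0 := by
      intro x h1 h2 h3
      by_contra h0
      have := hmax (k + m.toNat) ⟨x, h0, by
        have e : ((k + m.toNat : ℕ) : ℤ) = k + m := by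
          push_cast; rw [Int.toNat_of_nonneg hm.le]
        rw [e]
        convert h1 using 2
        push_cast; ring, h2, h3⟩
      omega
    refine ⟨key _ (ρ.L_wt m hwt) (ρ.L_hom m hh) ?_, key _ (ρ.H_wt m hwt) (ρ.H_hom m hh) ?_,
      key _ (ρ.Gp_wt m hwt) (ρ.Gp_hom m hh) ?_, key _ (ρ.Gm_wt m hwt) (ρ.Gm_hom m hh) ?_⟩
    · exact fun n hn => ρ.kill_L (hkill n hn) (hkill _ (by omega)) (by omega)
    · exact fun n hn => ρ.kill_H (hkill n hn) (hkill _ (by omega)) (by omega)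
    · exact fun n hn => ρ.kill_Gp (hkill n hn) (hkill _ (by omega)) (by omega)
    · exact fun n hn => ρ.kill_Gm (hkill n hn) (hkill _ (by omega)) (by omega)
  · push Not at hb
    obtain ⟨k, ⟨w, hw, hwt, hh, hkill⟩, hkN⟩ := hb N.toNat
    have hkN' : N < k := by omega
    refine ρ.highest_of_singular hfin hs hw hwt hh fun j hj => ?_
    have hx : ρ.L (-(k : ℤ)) w ∈ ρ.wt μ := by
      have := ρ.L_wt (-(k : ℤ)) hwt
      convert this using 2
      push_cast; ring
    obtain ⟨h1, h2, h3, h4⟩ := hN _ hx (j + k) (by omega)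
    obtain ⟨k1, k2, k3, k4⟩ := hkill (j + k) (by omega)
    have e1 : -(k : ℤ) + (j + k) = j := by ring
    have e2 : (j + k) + -(k : ℤ) = j := by ring
    have hj0 : j ≠ 0 := by omega
    refine ⟨?_, ?_, ?_, ?_⟩
    · have := ρ.rel_LL (-(k : ℤ)) (j + k) w
      rw [e1, h1, k1] at this
      simp only [hj0, map_zero, sub_self, if_false, mul_zero, zero_mul, zero_smul, add_zero]
        at this
      refine (smul_eq_zero.1 this.symm).resolve_left fun h => ?_
      have : (j + k - -(k : ℤ)) = 0 := by exact_mod_cast h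
      omega
    · have := ρ.rel_LH (-(k : ℤ)) (j + k) w
      rw [e1, h2, k2, map_zero, sub_self] at this
      refine (smul_eq_zero.1 this.symm).resolve_left fun h => ?_
      have : (j + k : ℤ) = 0 := by exact_mod_cast h
      omega
    · have := ρ.rel_LGp (-(k : ℤ)) (j + k) w
      rw [e2, h3, k3, map_zero, sub_self] at this
      refine (smul_eq_zero.1 this.symm).resolve_left fun h => ?_
      have : 2 * (j + k : ℤ) - -(k : ℤ) = 0 := by
        have h' : (2 : ℂ) * (((j + k : ℤ) : ℂ)) - ((-(k : ℤ) : ℤ) : ℂ) = 0 := by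
          linear_combination 2 * h
        exact_mod_cast h'
      omega
    · have := ρ.rel_LGm (-(k : ℤ)) (j + k) w
      rw [e2, h4, k4, map_zero, sub_self] at this
      refine (smul_eq_zero.1 this.symm).resolve_left fun h => ?_
      have : 2 * (j + k : ℤ) - -(k : ℤ) = 0 := by
        have h' : (2 : ℂ) * (((j + k : ℤ) : ℂ)) - ((-(k : ℤ) : ℤ) : ℂ) = 0 := by
          linear_combination 2 * h
        exact_mod_cast h'
      omega

/-- Dimension bound below a given weight if the module is not highest weight. -/
theorem bound_below (ρ : RamondRep V) (hweight : ρ.IsWeight)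
    (hfin : ∀ μ : ℂ, FiniteDimensional ℂ ↥(ρ.wt μ)) (hs : ρ.IsSimple)
    (hn : ¬ ρ.IsHighestWeight) (μ : ℂ) (k : ℕ) (hk : 1 ≤ k) :
    Module.finrank ℂ (ρ.wt (μ - k)) ≤
      4 * (Module.finrank ℂ (ρ.wt μ) + Module.finrank ℂ (ρ.wt (μ + 1))) := by
  by_contra hcon
  push Not at hcon
  apply hn
  haveI := hfin
  have e0 : μ - k + ((k : ℤ) : ℂ) = μ := by push_cast; ring
  have e1 : μ - k + ((k + 1 : ℤ) : ℂ) = μ + 1 := by push_cast; ring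
  let A := ρ.wt (μ - k)
  have L0 : ∀ v ∈ A, ρ.L k v ∈ ρ.wt μ := fun v hv => e0 ▸ ρ.L_wt k hv
  have H0 : ∀ v ∈ A, ρ.H k v ∈ ρ.wt μ := fun v hv => e0 ▸ ρ.H_wt k hv
  have P0 : ∀ v ∈ A, ρ.Gp k v ∈ ρ.wt μ := fun v hv => e0 ▸ ρ.Gp_wt k hv
  have M0 : ∀ v ∈ A, ρ.Gm k v ∈ ρ.wt μ := fun v hv => e0 ▸ ρ.Gm_wt k hv
  have L1 : ∀ v ∈ A, ρ.L (k + 1) v ∈ ρ.wt (μ + 1) := fun v hv => e1 ▸ ρ.L_wt (k + 1) hv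
  have H1 : ∀ v ∈ A, ρ.H (k + 1) v ∈ ρ.wt (μ + 1) := fun v hv => e1 ▸ ρ.H_wt (k + 1) hv
  have P1 : ∀ v ∈ A, ρ.Gp (k + 1) v ∈ ρ.wt (μ + 1) := fun v hv => e1 ▸ ρ.Gp_wt (k + 1) hv
  have M1 : ∀ v ∈ A, ρ.Gm (k + 1) v ∈ ρ.wt (μ + 1) := fun v hv => e1 ▸ ρ.Gm_wt (k + 1) hv
  let f := (((ρ.L k).restrict L0).prod ((ρ.H k).restrict H0)).prod
    (((ρ.Gp k).restrict P0).prod ((ρ.Gm k).restrict M0))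
  let g := (((ρ.L (k + 1)).restrict L1).prod ((ρ.H (k + 1)).restrict H1)).prod
    (((ρ.Gp (k + 1)).restrict P1).prod ((ρ.Gm (k + 1)).restrict M1))
  have hker : LinearMap.ker (f.prod g) ≠ ⊥ := by
    apply LinearMap.ker_ne_bot_of_finrank_lt
    simp only [Module.finrank_prod]
    change _ < Module.finrank ℂ (ρ.wt (μ - k))
    omega
  obtain ⟨x, hx, hx0⟩ := Submodule.exists_mem_ne_zero_of_ne_bot hker
  have hx' : (f.prod g) x = 0 := hx
  have a1 : ρ.L k x = 0 := congrArg (fun p => (p.1.1.1 : V)) hx'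
  have a2 : ρ.H k x = 0 := congrArg (fun p => (p.1.1.2 : V)) hx'
  have a3 : ρ.Gp k x = 0 := congrArg (fun p => (p.1.2.1 : V)) hx'
  have a4 : ρ.Gm k x = 0 := congrArg (fun p => (p.1.2.2 : V)) hx'
  have b1 : ρ.L (k + 1) x = 0 := congrArg (fun p => (p.2.1.1 : V)) hx'
  have b2 : ρ.H (k + 1) x = 0 := congrArg (fun p => (p.2.1.2 : V)) hx'
  have b3 : ρ.Gp (k + 1) x = 0 := congrArg (fun p => (p.2.2.1 : V)) hx'
  have b4 : ρ.Gm (k + 1) x = 0 := congrArg (fun p => (p.2.2.2 : V)) hx'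
  exact ρ.highest_of_tail hweight hfin hs (v := x) (fun h => hx0 (Subtype.ext h))
    (ρ.kill_large hk ⟨a1, a2, a3, a4⟩ ⟨b1, b2, b3, b4⟩)

/-- The representation twisted by the anti-grading automorphism. -/
def flip (ρ : RamondRep V) : RamondRep V where
  L m := -ρ.L (-m)
  H m := -ρ.H (-m)
  Gp m := ρ.Gm (-m)
  Gm m := -ρ.Gp (-m)
  c₀ := -ρ.c₀
  even := ρ.even
  odd := ρ.odd
  grading := ρ.grading
  L_even m v hv := neg_mem (ρ.L_even _ v hv)
  L_odd m v hv := neg_mem (ρ.L_odd _ v hv)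
  H_even m v hv := neg_mem (ρ.H_even _ v hv)
  H_odd m v hv := neg_mem (ρ.H_odd _ v hv)
  Gp_even m v hv := ρ.Gm_even _ v hv
  Gp_odd m v hv := ρ.Gm_odd _ v hv
  Gm_even m v hv := neg_mem (ρ.Gp_even _ v hv)
  Gm_odd m v hv := neg_mem (ρ.Gp_odd _ v hv)
  rel_LL m n v := by
    have h := ρ.rel_LL (-m) (-n) v
    have e : -m + -n = -(m + n) := by ring
    simp only [e, neg_eq_zero] at h
    simp only [LinearMap.neg_apply, map_neg, neg_neg]
    rw [h]; push_cast; module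
  rel_HH m n v := by
    have h := ρ.rel_HH (-m) (-n) v
    have e : -m + -n = -(m + n) := by ring
    simp only [e, neg_eq_zero] at h
    simp only [LinearMap.neg_apply, map_neg, neg_neg]
    rw [h]; push_cast; module
  rel_LH m n v := by
    have h := ρ.rel_LH (-m) (-n) v
    have e : -m + -n = -(m + n) := by ring
    simp only [e] at h
    simp only [LinearMap.neg_apply, map_neg, neg_neg]
    rw [h]; push_cast; module
  rel_LGp m p v := by
    have h := ρ.rel_LGm (-m) (-p) v
    have e : -p + -m = -(p + m) := by ring
    simp only [e] at h
    simp only [LinearMap.neg_apply, map_neg]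
    rw [← neg_sub', h]; push_cast; module
  rel_LGm m p v := by
    have h := ρ.rel_LGp (-m) (-p) v
    have e : -p + -m = -(p + m) := by ring
    simp only [e] at h
    simp only [LinearMap.neg_apply, map_neg, neg_neg]
    rw [h]; push_cast; module
  rel_HGp m p v := by
    have h := ρ.rel_HGm (-m) (-p) v
    have e : -m + -p = -(m + p) := by ring
    simp only [e] at h
    simp only [LinearMap.neg_apply, map_neg]
    rw [← neg_sub', h]; module
  rel_HGm m p v := by
    have h := ρ.rel_HGp (-m) (-p) v
    have e : -m + -p = -(m + p) := by ring
    simp only [e] at h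
    simp only [LinearMap.neg_apply, map_neg, neg_neg]
    rw [h]
  rel_GpGm p q v := by
    have h := ρ.rel_GpGm (-q) (-p) v
    have e : -q + -p = -(p + q) := by ring
    simp only [e, neg_eq_zero] at h
    simp only [LinearMap.neg_apply, map_neg]
    rw [← neg_add, add_comm, h]
    by_cases hpq : p + q = 0
    · obtain rfl : q = -p := by omega
      simp only [add_neg_cancel, if_true]
      push_cast; module
    · simp only [hpq, if_false]
      push_cast; module
  rel_GpGp p q v := ρ.rel_GmGm (-p) (-q) v
  rel_GmGm p q v := by
    simpa using ρ.rel_GpGp (-p) (-q) v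

theorem flip_wt (ρ : RamondRep V) (μ : ℂ) : ρ.flip.wt μ = ρ.wt (-μ) := by
  ext v
  rw [mem_wt, mem_wt]
  simp [flip, neg_eq_iff_eq_neg]

theorem flip_weight (ρ : RamondRep V) (h : ρ.IsWeight) : ρ.flip.IsWeight := by
  unfold IsWeight at *
  rw [eq_top_iff, ← h]
  refine iSup_le fun μ => ?_
  refine le_trans ?_ (le_iSup _ (-μ))
  rw [flip_wt, neg_neg]

theorem flip_submod (ρ : RamondRep V) (W : Submodule ℂ V) (h : ρ.flip.IsSubmod W) :
    ρ.IsSubmod W := by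
  obtain ⟨h1, h2, h3, h4⟩ := h
  refine ⟨fun m v hv => ?_, fun m v hv => ?_, fun m v hv => ?_, fun m v hv => ?_⟩
  · simpa [flip] using h1 (-m) v hv
  · simpa [flip] using h2 (-m) v hv
  · simpa [flip] using h4 (-m) v hv
  · simpa [flip] using h3 (-m) v hv

theorem submod_flip (ρ : RamondRep V) (W : Submodule ℂ V) (h : ρ.IsSubmod W) :
    ρ.flip.IsSubmod W := by
  obtain ⟨h1, h2, h3, h4⟩ := h
  exact ⟨fun m v hv => neg_mem (h1 (-m) v hv), fun m v hv => neg_mem (h2 (-m) v hv),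
    fun m v hv => h4 (-m) v hv, fun m v hv => neg_mem (h3 (-m) v hv)⟩

theorem flip_simple (ρ : RamondRep V) (h : ρ.IsSimple) : ρ.flip.IsSimple := by
  refine ⟨fun ht => h.1 fun m v => ?_, fun W hW => h.2 W ⟨ρ.flip_submod W hW.1, hW.2⟩⟩
  obtain ⟨h1, h2, h3, h4⟩ := ht (-m) v
  simp only [flip, neg_neg, LinearMap.neg_apply, neg_eq_zero] at h1 h2 h3 h4
  exact ⟨h1, h2, h4, h3⟩

theorem flip_highest (ρ : RamondRep V) (h : ρ.flip.IsHighestWeight) : ρ.IsLowestWeight := by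
  obtain ⟨v, hv, hg, ⟨a, b, ha, hb⟩, hk, h0⟩ := h
  refine ⟨v, hv, fun W hW hvW => hg W (ρ.submod_flip W hW) hvW, ⟨-a, -b, ?_, ?_⟩, ?_, ?_⟩
  · simpa [flip, neg_eq_iff_eq_neg] using ha
  · simpa [flip, neg_eq_iff_eq_neg] using hb
  · intro m hm
    obtain ⟨h1, h2, h3, h4⟩ := hk (-m) (by omega)
    simp only [flip, neg_neg, LinearMap.neg_apply, neg_eq_zero] at h1 h2 h3 h4
    exact ⟨h1, h2, h4, h3⟩
  · simpa [flip] using h0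

/-- All weights lie in a single coset of the integers. -/
theorem wt_coset (ρ : RamondRep V) (hs : ρ.IsSimple) {μ : ℂ} {w : V} (hw : w ≠ 0)
    (hwt : w ∈ ρ.wt μ) (ν : ℂ) (hν : ∀ k : ℤ, ν ≠ μ + k) : ρ.wt ν = ⊥ := by
  let W : Submodule ℂ V := ⨆ k : ℤ, ρ.wt (μ + k)
  have key : ∀ (f : V →ₗ[ℂ] V) (m : ℤ), (∀ (a : ℂ) (v : V), v ∈ ρ.wt a → f v ∈ ρ.wt (a + m)) →
      ∀ v ∈ W, f v ∈ W := by
    intro f m hf v hv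
    induction hv using Submodule.iSup_induction' with
    | mem k x hx =>
      refine Submodule.mem_iSup_of_mem (k + m) ?_
      have := hf _ x hx
      convert this using 2
      push_cast; ring
    | zero => simp
    | add x y _ _ hx hy => rw [map_add]; exact add_mem hx hy
  have hgr : ρ.IsGradedSubmod W := by
    refine ⟨⟨fun m => key _ m fun a v h => ρ.L_wt m h, fun m => key _ m fun a v h => ρ.H_wt m h,
      fun m => key _ m fun a v h => ρ.Gp_wt m h, fun m => key _ m fun a v h => ρ.Gm_wt m h⟩, ?_⟩
    apply le_antisymm
    · refine iSup_le fun k v hv => ?_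
      obtain ⟨e, he, o, ho, rfl⟩ := ρ.split v
      have h := ρ.wt_split he ho hv
      exact Submodule.add_mem_sup ⟨Submodule.mem_iSup_of_mem k h.1, he⟩
        ⟨Submodule.mem_iSup_of_mem k h.2, ho⟩
    · exact sup_le inf_le_left inf_le_left
  have hW : W = ⊤ := by
    refine (hs.2 W hgr).resolve_left fun h => hw ?_
    have : w ∈ W := Submodule.mem_iSup_of_mem 0 (by simpa using hwt)
    rw [h] at this
    simpa using this
  have hind : iSupIndep ρ.wt := Module.End.eigenspaces_iSupIndep (ρ.L 0)
  have hd : Disjoint (ρ.wt ν) W := by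
    refine (hind ν).mono_right (iSup_le fun k => ?_)
    exact le_iSup₂_of_le (μ + k) (hν k).symm le_rfl
  rw [hW] at hd
  exact disjoint_top.1 hd

end RamondRep

/-- a simple weight module with finite-dimensional weight spaces over
the `N = 2` Ramond algebra which is neither a highest weight module nor a lowest
weight module is cuspidal. -/
theorem stmt1 {V : Type} [AddCommGroup V] [Module ℂ V] (ρ : RamondRep V)
    (hweight : ρ.IsWeight) (hfin : ∀ μ : ℂ, FiniteDimensional ℂ ↥(ρ.wt μ))
    (hsimple : ρ.IsSimple)
    (hnothw : ¬ ρ.IsHighestWeight) (hnotlw : ¬ ρ.IsLowestWeight) :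
    ρ.Cuspidal := by
  refine ⟨hweight, ?_⟩
  obtain ⟨μ, w, hw, hwt, -⟩ := ρ.exists_hom hweight hsimple
  let d : ℂ → ℕ := fun a => Module.finrank ℂ (ρ.wt a)
  have hbelow : ∀ k : ℕ, 1 ≤ k → d (μ - k) ≤ 4 * (d μ + d (μ + 1)) :=
    fun k hk => ρ.bound_below hweight hfin hsimple hnothw μ k hk
  have habove : ∀ k : ℕ, 1 ≤ k → d (μ + k) ≤ 4 * (d μ + d (μ - 1)) := by
    intro k hk
    have := ρ.flip.bound_below (ρ.flip_weight hweight)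
      (fun ν => by rw [RamondRep.flip_wt]; exact hfin _) (ρ.flip_simple hsimple)
      (fun h => hnotlw (ρ.flip_highest h)) (-μ) k hk
    rw [RamondRep.flip_wt, RamondRep.flip_wt, RamondRep.flip_wt] at this
    have e1 : -(-μ - (k : ℂ)) = μ + k := by ring
    have e2 : -(-μ + 1) = μ - 1 := by ring
    rw [e1, e2, neg_neg] at this
    exact this
  refine ⟨d μ + 4 * (d μ + d (μ + 1)) + 4 * (d μ + d (μ - 1)), fun ν τ => ?_⟩
  haveI := hfin ν
  have hle : d ν ≤ d μ + 4 * (d μ + d (μ + 1)) + 4 * (d μ + d (μ - 1)) := by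
    by_cases hν : ∀ k : ℤ, ν ≠ μ + k
    · have : d ν = 0 := by
        simp only [d]; rw [ρ.wt_coset hsimple hw hwt ν hν]; simp
      omega
    · push Not at hν
      obtain ⟨k, rfl⟩ := hν
      rcases Int.eq_nat_or_neg k with ⟨n, rfl | rfl⟩
      · rcases Nat.eq_zero_or_pos n with rfl | hn
        · simp only [Nat.cast_zero, Int.cast_zero, add_zero]; omega
        · have := habove n hn
          simp only [Int.cast_natCast]; omega
      · rcases Nat.eq_zero_or_pos n with rfl | hn
        · simp only [Nat.cast_zero, neg_zero, Int.cast_zero, add_zero]; omega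
        · have := hbelow n hn
          simp only [Int.cast_neg, Int.cast_natCast, ← sub_eq_add_neg]; omega
  calc Module.rank ℂ ↥(ρ.wt ν ⊓ ρ.parity τ) ≤ Module.rank ℂ (ρ.wt ν) :=
        Submodule.rank_mono inf_le_left
    _ = (d ν : Cardinal) := (Module.finrank_eq_rank ℂ _).symm
    _ ≤ _ := by exact_mod_cast hle
end

section
/- Let V be a module over the N=2 Ramond algebra 𝔤, let n ≥ 1 be an integer, and let v ∈ V satisfy L_n v = L_{n+1} v = H_n v = G_n^+ v = G_n^- v = 0. Then there exists an integer N₀ > 0 such that L_ℓ v = H_ℓ v = G_ℓ^+ v = G_ℓ^- v = 0 for all integers ℓ ≥ N₀. -/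
open Submodule

/-- if `v` is killed by `L_n, L_{n+1}, H_n, G_n^+, G_n^-` for some
`n ≥ 1`, then `v` is killed by `L_ℓ, H_ℓ, G_ℓ^+, G_ℓ^-` for all sufficiently
large `ℓ`. -/
theorem stmt3 {V : Type} [AddCommGroup V] [Module ℂ V] (ρ : RamondRep V)
    (n : ℤ) (hn : 1 ≤ n) (v : V)
    (hL : ρ.L n v = 0) (hL' : ρ.L (n + 1) v = 0) (hH : ρ.H n v = 0)
    (hGp : ρ.Gp n v = 0) (hGm : ρ.Gm n v = 0) :
    ∃ N₀ : ℤ, 0 < N₀ ∧ ∀ l : ℤ, N₀ ≤ l →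
      ρ.L l v = 0 ∧ ρ.H l v = 0 ∧ ρ.Gp l v = 0 ∧ ρ.Gm l v = 0 := by
  have hstep : ∀ k : ℤ, 0 < k → ρ.H k v = 0 → ∀ m : ℤ, ρ.L m v = 0 → ρ.H (m + k) v = 0 := by
    intro k hk h m hm
    have h1 := ρ.rel_LH m k v
    rw [h, hm, map_zero, map_zero, sub_zero] at h1
    have hk' : (k : ℂ) ≠ 0 := by exact_mod_cast hk.ne'
    exact (smul_eq_zero.mp h1.symm).resolve_left hk'
  have hA : ∀ a : ℕ, ρ.H (n + a * n) v = 0 := by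
    intro a
    induction a with
    | zero => simpa using hH
    | succ a ih =>
      have h1 := hstep _ (by positivity) ih n hL
      rw [show n + ((a + 1 : ℕ) : ℤ) * n = n + (n + a * n) by push_cast; ring]
      exact h1
  have hB : ∀ a b : ℕ, ρ.H (n + a * n + b * (n + 1)) v = 0 := by
    intro a b
    induction b with
    | zero => simpa using hA a
    | succ b ih =>
      have h1 := hstep _ (by positivity) ih (n + 1) hL'
      rw [show n + a * n + ((b + 1 : ℕ) : ℤ) * (n + 1) =
        (n + 1) + (n + a * n + b * (n + 1)) by push_cast; ring]
      exact h1
  have hHall : ∀ l : ℤ, n + n * n ≤ l → ρ.H l v = 0 := by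
    intro l hl
    have hr0 := Int.emod_nonneg (l - n) (show n ≠ 0 by omega)
    have hr1 := Int.emod_lt_of_pos (l - n) (show 0 < n by omega)
    have hq : n ≤ (l - n) / n := (Int.le_ediv_iff_mul_le (by omega)).mpr (by linarith)
    have he := Int.emod_add_mul_ediv (l - n) n
    obtain ⟨r, hr⟩ := Int.eq_ofNat_of_zero_le hr0
    obtain ⟨a, ha⟩ := Int.eq_ofNat_of_zero_le
      (show 0 ≤ (l - n) / n - (l - n) % n by omega)
    have h1 := hB a r
    rw [← ha, ← hr] at h1
    convert h1 using 2
    congr 1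
    linear_combination -he
  have hGpall : ∀ l : ℤ, n + n * n + n ≤ l → ρ.Gp l v = 0 := by
    intro l hl
    have h1 := ρ.rel_HGp (l - n) n v
    rw [hGp, hHall (l - n) (by linarith), map_zero, map_zero, sub_zero, sub_add_cancel] at h1
    exact h1.symm
  have hGmall : ∀ l : ℤ, n + n * n + n ≤ l → ρ.Gm l v = 0 := by
    intro l hl
    have h1 := ρ.rel_HGm (l - n) n v
    rw [hGm, hHall (l - n) (by linarith), map_zero, map_zero, sub_zero, sub_add_cancel] at h1
    exact neg_eq_zero.mp h1.symm
  refine ⟨n + n * n + n + n, by positivity, fun l hl => ⟨?_, hHall l (by linarith),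
    hGpall l (by linarith), hGmall l (by linarith)⟩⟩
  have h1 := ρ.rel_GpGm (l - n) n v
  have hl0 : l ≠ 0 := by nlinarith
  rw [hGm, hGpall (l - n) (by linarith), map_zero, map_zero, sub_add_cancel,
    hHall l (by linarith), if_neg hl0] at h1
  simpa using h1.symm
end
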